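/- arXiv:2307.12633 — 14 statements merged into one kernel-verified Lean document; each statement's English description precedes it below -/
import Mathlib

section
/- Let L be a finite Lie ring and suppose cp(L) = ε. Then there exists an ideal D of L such that the index of D in (L,+) is at most f(ε) and the order of the additive subgroup generated by the brackets [D,D] is at most f(ε), where f is a function depending only on ε (i.e., there is a universal function f : ℝ → ℕ with this property for all finite Lie rings L with cp(L) ≥ ε). -/
/-!
Write `b(x) = |[x, L]|` for the breadth of `x` and `T c = {x | b(x) ≤ c}`.  The commuting probability
is the average of `1 / b(x)`, so with `n = ⌈2 / ε⌉` the set `S = T n` contains at least `|L| / n`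
elements (`card_le_mul_card_breadth_le`).

Breadth is submultiplicative, `b(x ± y) ≤ b(x) b(y)`, and `b([x, y]) ≤ b(x)²` by the Jacobi identity.
Hence if `T (c²) ⊆ T c`, then `T c` is already an ideal (`idealOfBreadth`).  Such a `c` occurs among
the first `n + 1` terms of `n, n⁴, n¹⁶, …`: otherwise, picking `xⱼ ∈ T (cⱼ²) \ T cⱼ` for each term
`cⱼ` gives `n + 1` pairwise disjoint translates `xⱼ + S` inside `L`, which is too many
(`exists_breadth_stable`).  The ideal `D = T c` contains `S`, so it has index at most `n`.

It remains to bound `[D, D]`, given that all elements of `D` have breadth at most `M`.  This is the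
bilinear version of B. H. Neumann's theorem on BFC groups (`exists_subgroup_of_bounded`): if
`x` has maximal image `[x, D]`, realised as `{[x, bᵢ]}`, and `U` is the common centralizer of the
`bᵢ`, then `[U, D] ⊆ [x, D]`, and the boundedly many cosets of `U` contribute boundedly
many further subgroups of bounded order.
-/

/-- The commuting probability of a finite Lie ring: the probability that
two random elements commute, i.e. have zero bracket. -/
noncomputable def lieCommProb (L : Type) [LieRing L] [Fintype L] : ℝ :=
  (Nat.card {p : L × L // ⁅p.1, p.2⁆ = 0} : ℝ) / (Nat.card L : ℝ) ^ 2

namespace LieNeumann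

/-- If a biadditive map has all one-sided images of order at most `M`, then all
its values lie in a subgroup of order bounded in terms of `M`. -/
theorem exists_subgroup_of_bounded {A B C : Type} [AddCommGroup A] [AddCommGroup B]
    [AddCommGroup C] [Finite A] [Finite B] (f : A →+ B →+ C) (M : ℕ) (hM : 1 ≤ M)
    (h1 : ∀ a, Nat.card (f a).range ≤ M) (h2 : ∀ b, Nat.card (f.flip b).range ≤ M) :
    ∃ H : AddSubgroup C, (∀ a b, f a b ∈ H) ∧ Finite H ∧ Nat.card H ≤ M * M ^ (M ^ M) := by
  classical
  obtain ⟨x, hx⟩ := Finite.exists_max (fun a => Nat.card (f a).range)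
  have hfin : ∀ a, Finite (f a).range := fun a => Set.finite_range (f a)
  choose β hβ using fun c : (f x).range => c.2
  have := hfin x
  have := Fintype.ofFinite (f x).range
  let U : AddSubgroup A := ⨅ c : (f x).range, (f.flip (β c)).ker
  have hU : U.index ≤ M ^ M := by
    calc U.index ≤ ∏ c : (f x).range, ((f.flip (β c)).ker).index := AddSubgroup.index_iInf_le _
      _ ≤ ∏ c : (f x).range, M := by
        refine Finset.prod_le_prod' fun c _ => ?_
        rw [AddSubgroup.index_ker]; exact h2 _
      _ = M ^ Nat.card (f x).range := by
        rw [Finset.prod_const, Finset.card_univ, Nat.card_eq_fintype_card]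
      _ ≤ M ^ M := Nat.pow_le_pow_right hM (h1 x)
  have hUB : ∀ u ∈ U, ∀ b, f u b ∈ (f x).range := by
    intro u hu b
    have hle : (f x).range ≤ (f (x + u)).range := by
      intro c hc
      refine ⟨β ⟨c, hc⟩, ?_⟩
      have h3 : f u (β ⟨c, hc⟩) = 0 := by
        have := (AddSubgroup.mem_iInf.1 hu) ⟨c, hc⟩
        simpa [AddMonoidHom.mem_ker] using this
      rw [map_add, AddMonoidHom.add_apply, h3, add_zero, hβ]
    have := hfin (x + u)
    -- the image of `x + u` contains that of `x`, so maximality of `x` makes them equal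
    have heq : (f x).range = (f (x + u)).range := AddSubgroup.eq_of_le_of_card_ge hle (hx _)
    have h4 : f u b = f (x + u) b - f x b := by simp
    rw [h4]
    exact sub_mem (heq ▸ ⟨b, rfl⟩) ⟨b, rfl⟩
  have : Fintype (A ⧸ U) := Fintype.ofFinite _
  let φ : ((f x).range × ((q : A ⧸ U) → (f q.out).range)) →+ C :=
    AddMonoidHom.mk' (fun p => (p.1 : C) + ∑ q, (p.2 q : C)) (by
      intro p p'
      simp only [Prod.fst_add, Prod.snd_add, AddSubgroup.coe_add, Pi.add_apply,
        Finset.sum_add_distrib]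
      abel)
  have hf2 : ∀ q : A ⧸ U, Finite (f q.out).range := fun q => hfin _
  refine ⟨φ.range, ?_, Set.finite_range φ, ?_⟩
  · intro a b
    let q : A ⧸ U := QuotientAddGroup.mk a
    have hu : -q.out + a ∈ U := by
      rw [← QuotientAddGroup.eq]; exact Quotient.out_eq q
    refine ⟨(⟨_, hUB _ hu b⟩, Pi.single q ⟨f q.out b, b, rfl⟩), ?_⟩
    have h5 : ∑ p : A ⧸ U, ((Pi.single q ⟨f q.out b, b, rfl⟩ :
        (p : A ⧸ U) → (f p.out).range) p : C) = f q.out b := by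
      rw [Finset.sum_eq_single q]
      · simp
      · intro p _ hp
        simp [Pi.single_eq_of_ne hp]
      · simp
    change f (-q.out + a) b + _ = _
    rw [h5]
    simp
  · calc Nat.card φ.range
        ≤ Nat.card ((f x).range × ((q : A ⧸ U) → (f q.out).range)) :=
          Nat.card_le_card_of_surjective _ φ.rangeRestrict_surjective
      _ = Nat.card (f x).range * ∏ q : A ⧸ U, Nat.card (f q.out).range := by
          rw [Nat.card_prod, Nat.card_pi]
      _ ≤ M * ∏ q : A ⧸ U, M :=
          Nat.mul_le_mul (h1 x) (Finset.prod_le_prod' fun q _ => h1 _)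
      _ = M * M ^ U.index := by simp [AddSubgroup.index, Nat.card_eq_fintype_card]
      _ ≤ M * M ^ (M ^ M) := Nat.mul_le_mul_left _ (Nat.pow_le_pow_right hM hU)

variable {L : Type} [LieRing L] [Fintype L]

/-- The bracket of a Lie ring as a biadditive map. -/
def brk (L : Type) [LieRing L] : L →+ L →+ L :=
  AddMonoidHom.mk' (fun x => AddMonoidHom.mk' (fun y => ⁅x, y⁆) (lie_add x))
    (fun x x' => by ext y; exact add_lie x x' y)

omit [Fintype L] in
@[simp] lemma brk_apply (x y : L) : brk L x y = ⁅x, y⁆ := rfl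

/-- The breadth `|[x, L]|` of an element `x` of a Lie ring. -/
noncomputable def breadth (x : L) : ℕ := Nat.card (brk L x).range

/-- An element whose brackets all decompose into a part in `[x, L]` and a part in the image of
`[y, L]` under a fixed additive map has breadth at most `b(x) b(y)`. -/
lemma breadth_le_of_decomp {x y z : L} (g : L →+ L)
    (h : ∀ w, ∃ u v, ⁅z, w⁆ = ⁅x, u⁆ + g ⁅y, v⁆) : breadth z ≤ breadth x * breadth y := by
  unfold breadth
  rw [← Nat.card_prod]
  let φ : (brk L x).range × (brk L y).range → L := fun p => p.1 + g p.2
  have hsub : ((brk L z).range : Set L) ⊆ Set.range φ := by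
    rintro _ ⟨w, rfl⟩
    obtain ⟨u, v, h⟩ := h w
    exact ⟨(⟨_, u, rfl⟩, ⟨_, v, rfl⟩), h.symm⟩
  exact (Nat.card_mono (Set.toFinite _) hsub).trans (Finite.card_range_le φ)

lemma breadth_add_le (x y : L) : breadth (x + y) ≤ breadth x * breadth y :=
  breadth_le_of_decomp (AddMonoidHom.id L) fun w => ⟨w, w, add_lie x y w⟩

lemma breadth_lie_le (x y : L) : breadth ⁅y, x⁆ ≤ breadth x * breadth x :=
  breadth_le_of_decomp (brk L y) fun w => ⟨-⁅y, w⁆, w, by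
    rw [lie_lie, lie_neg, brk_apply]; abel⟩

omit [Fintype L] in
lemma breadth_neg (x : L) : breadth (-x) = breadth x := by
  unfold breadth
  congr! 2
  ext z
  simp only [AddMonoidHom.mem_range, brk_apply]
  constructor
  · rintro ⟨w, rfl⟩; exact ⟨-w, by simp⟩
  · rintro ⟨w, rfl⟩; exact ⟨-w, by simp⟩

omit [Fintype L] in
lemma breadth_zero : breadth (0 : L) = 1 := by
  simp [breadth]

/-- Elements of breadth at most `c` form an ideal as soon as breadth at most `c²` implies breadth
at most `c`. -/
def idealOfBreadth (c : ℕ) (hc : 1 ≤ c) (h : ∀ x : L, breadth x ≤ c ^ 2 → breadth x ≤ c) :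
    LieIdeal ℤ L where
  carrier := {x | breadth x ≤ c}
  zero_mem' := by simpa [breadth_zero] using hc
  add_mem' {x y} hx hy := h _ <| (breadth_add_le x y).trans <| by
    rw [sq]; exact Nat.mul_le_mul hx hy
  smul_mem' k x hx := by
    have hadd : ∀ x y : L, breadth x ≤ c → breadth y ≤ c → breadth (x + y) ≤ c :=
      fun x y hx hy => h _ <| (breadth_add_le x y).trans <| by
        rw [sq]; exact Nat.mul_le_mul hx hy
    let H : AddSubgroup L :=
      { carrier := {x | breadth x ≤ c}
        zero_mem' := by simpa [breadth_zero] using hc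
        add_mem' := fun {x y} hx hy => hadd x y hx hy
        neg_mem' := fun {x} hx => by simpa [breadth_neg] using hx }
    exact H.zsmul_mem (x := x) hx k
  lie_mem {y x} hx := h _ <| (breadth_lie_le x y).trans <| by
    rw [sq]; exact Nat.mul_le_mul hx hx

/-- If the elements of breadth at most `n` have density at least `1 / n`, then some term `c` of
`n, n⁴, n¹⁶, …` of index at most `n` satisfies the hypothesis of `idealOfBreadth`. -/
lemma exists_breadth_stable (n : ℕ) (hn : 1 ≤ n)
    (hcard : Nat.card L ≤ n * Nat.card {x : L // breadth x ≤ n}) :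
    ∃ j ≤ n, ∀ x : L, breadth x ≤ (n ^ 4 ^ j) ^ 2 → breadth x ≤ n ^ 4 ^ j := by
  by_contra! hcon
  choose! x hx1 hx2 using hcon
  have key : ∀ i j : ℕ, i ≤ n → j ≤ n → i < j → ∀ s t : L, breadth s ≤ n → breadth t ≤ n →
      x i + s ≠ x j + t := by
    intro i j hi hj hij s t hs ht heq
    refine absurd (hx2 j hj) (not_lt.2 ?_)
    have e : x j = (x i + s) + -t := by rw [heq]; abel
    have hp : n ≤ n ^ 4 ^ i := Nat.le_self_pow (by positivity) n
    calc breadth (x j) ≤ breadth (x i + s) * breadth (-t) := e ▸ breadth_add_le _ _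
      _ ≤ (breadth (x i) * breadth s) * breadth t := by
        rw [breadth_neg]; exact Nat.mul_le_mul_right _ (breadth_add_le _ _)
      _ ≤ ((n ^ 4 ^ i) ^ 2 * n ^ 4 ^ i) * n ^ 4 ^ i :=
        Nat.mul_le_mul (Nat.mul_le_mul (hx1 i hi) (hs.trans hp)) (ht.trans hp)
      _ = n ^ 4 ^ (i + 1) := by ring
      _ ≤ n ^ 4 ^ j := Nat.pow_le_pow_right hn (Nat.pow_le_pow_right (by norm_num) hij)
  let φ : Fin (n + 1) × {x : L // breadth x ≤ n} → L := fun p => x p.1 + p.2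
  have hφ : Function.Injective φ := by
    rintro ⟨⟨i, hi⟩, s, hs⟩ ⟨⟨j, hj⟩, t, ht⟩ h
    change x i + s = x j + t at h
    rcases lt_trichotomy i j with hij | rfl | hij
    · exact absurd h (key i j (by omega) (by omega) hij s t hs ht)
    · simpa using h
    · exact absurd h.symm (key j i (by omega) (by omega) hij t s ht hs)
  have h1 := Nat.card_le_card_of_injective φ hφ
  rw [Nat.card_prod, Nat.card_fin] at h1
  have h2 : 0 < Nat.card {x : L // breadth x ≤ n} := by
    have : Nonempty {x : L // breadth x ≤ n} := ⟨⟨0, by rwa [breadth_zero]⟩⟩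
    exact Nat.card_pos
  nlinarith

/-- The elements of breadth at most `n` have density at least `1 / n`, for every `n ≥ 2 / cp(L)`. -/
lemma card_le_mul_card_breadth_le (n : ℕ) (hn : 2 ≤ n * lieCommProb L) :
    Nat.card L ≤ n * Nat.card {x : L // breadth x ≤ n} := by
  classical
  have hLpos : (0 : ℝ) < Nat.card L := by exact_mod_cast Nat.card_pos
  have hk : ∀ x : L, Nat.card (brk L x).ker * breadth x = Nat.card L := by
    intro x
    rw [breadth, ← AddSubgroup.index_ker, AddSubgroup.card_mul_index]
  have hcomm : Nat.card {p : L × L // ⁅p.1, p.2⁆ = 0} = ∑ x : L, Nat.card (brk L x).ker := by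
    rw [← Nat.card_sigma]
    exact Nat.card_congr
      { toFun := fun p => ⟨p.1.1, p.1.2, p.2⟩
        invFun := fun p => ⟨(p.1, p.2.1), p.2.2⟩
        left_inv := fun _ => rfl
        right_inv := fun _ => rfl }
  have hpt : ∀ x : L, n * Nat.card (brk L x).ker ≤
      (if breadth x ≤ n then n * Nat.card L else 0) + Nat.card L := by
    intro x
    have := hk x
    split_ifs with hx
    · have : Nat.card (brk L x).ker ≤ Nat.card L := Finite.card_subtype_le _
      nlinarith
    · push Not at hx
      nlinarith
  have hsum : n * Nat.card {p : L × L // ⁅p.1, p.2⁆ = 0} ≤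
      Nat.card {x : L // breadth x ≤ n} * (n * Nat.card L) + Nat.card L * Nat.card L := by
    rw [hcomm, Finset.mul_sum]
    refine (Finset.sum_le_sum fun x _ => hpt x).trans (le_of_eq ?_)
    rw [Finset.sum_add_distrib, ← Finset.sum_filter, Finset.sum_const, Finset.sum_const,
      Nat.card_eq_fintype_card (α := {x : L // breadth x ≤ n}), Fintype.card_subtype]
    simp
  have hsum' : (n : ℝ) * Nat.card {p : L × L // ⁅p.1, p.2⁆ = 0} ≤
      Nat.card {x : L // breadth x ≤ n} * (n * Nat.card L) + Nat.card L * Nat.card L := by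
    exact_mod_cast hsum
  have h2 : 2 * (Nat.card L : ℝ) ^ 2 ≤ n * Nat.card {p : L × L // ⁅p.1, p.2⁆ = 0} := by
    rw [lieCommProb, ← mul_div_assoc, le_div_iff₀ (by positivity)] at hn
    exact hn
  have h3 : (Nat.card L : ℝ) * Nat.card L ≤
      (n * Nat.card {x : L // breadth x ≤ n}) * Nat.card L := by nlinarith
  exact_mod_cast le_of_mul_le_mul_right h3 hLpos

lemma lieCommProb_pos : 0 < lieCommProb L := by
  have : Nonempty {p : L × L // ⁅p.1, p.2⁆ = 0} := ⟨⟨0, by simp⟩⟩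
  have h1 : 0 < Nat.card {p : L × L // ⁅p.1, p.2⁆ = 0} := Nat.card_pos
  have h2 : 0 < Nat.card L := Nat.card_pos
  unfold lieCommProb
  positivity

/-- An ideal whose elements have breadth at most `M` has derived subgroup of `M`-bounded order. -/
lemma card_closure_le (D : LieIdeal ℤ L) (M : ℕ) (hM : 1 ≤ M) (hD : ∀ x ∈ D, breadth x ≤ M) :
    Nat.card (AddSubgroup.closure {z : L | ∃ x ∈ D, ∃ y ∈ D, z = ⁅x, y⁆}) ≤ M * M ^ (M ^ M) := by
  let ι : D →+ L := AddSubgroupClass.subtype D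
  let f : D →+ D →+ L := ((brk L).comp ι).compl₂ ι
  have hf : ∀ x y : D, f x y = ⁅(x : L), (y : L)⁆ := fun _ _ => rfl
  obtain ⟨H, hH, hfin, hcard⟩ := exists_subgroup_of_bounded f M hM (fun a => by
      refine le_trans (AddSubgroup.card_le_of_le (K := (brk L a).range) ?_) (hD a a.2)
      rintro _ ⟨y, rfl⟩
      exact ⟨y, rfl⟩) (fun b => by
      refine le_trans (AddSubgroup.card_le_of_le (K := (brk L b).range) ?_) (hD b b.2)
      rintro _ ⟨y, rfl⟩
      refine ⟨-y, ?_⟩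
      rw [AddMonoidHom.flip_apply, hf, brk_apply, lie_neg, lie_skew])
  refine (AddSubgroup.card_le_of_le ((AddSubgroup.closure_le H).2 ?_)).trans hcard
  rintro _ ⟨x, hx, y, hy, rfl⟩
  exact hH ⟨x, hx⟩ ⟨y, hy⟩

end LieNeumann

open LieNeumann in
/-- **Neumann's theorem for finite Lie rings.**  There is a universal function
`f : ℝ → ℕ` such that for every finite Lie ring `L` with `cp(L) = ε` there is an
ideal `D` of `L` whose additive index is at most `f ε` and such that the additive
subgroup generated by the brackets `⁅x, y⁆` with `x, y ∈ D` has order at most `f ε`. -/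
theorem lieRing_lieCommProb_neumann :
    ∃ f : ℝ → ℕ, ∀ (L : Type) [LieRing L] [Fintype L] (ε : ℝ),
      lieCommProb L = ε →
      ∃ D : LieIdeal ℤ L,
        (LieSubmodule.toSubmodule D).toAddSubgroup.index ≤ f ε ∧
        Nat.card
          (AddSubgroup.closure {z : L | ∃ x ∈ D, ∃ y ∈ D, z = ⁅x, y⁆}) ≤ f ε := by
  let N : ℝ → ℕ := fun ε => ⌈2 / ε⌉₊
  let M : ℝ → ℕ := fun ε => N ε ^ 4 ^ N ε
  refine ⟨fun ε => N ε + M ε * M ε ^ (M ε ^ M ε), ?_⟩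
  rintro L _ _ ε rfl
  have hpos := lieCommProb_pos (L := L)
  set n := N (lieCommProb L) with hn
  have h2 : 2 ≤ n * lieCommProb L := (div_le_iff₀ hpos).1 (Nat.le_ceil _)
  have hn1 : 1 ≤ n := Nat.ceil_pos.2 (by positivity)
  have hS := card_le_mul_card_breadth_le n h2
  obtain ⟨j, hj, hstab⟩ := exists_breadth_stable n hn1 hS
  let D : LieIdeal ℤ L := idealOfBreadth (n ^ 4 ^ j) (Nat.one_le_pow _ _ hn1) hstab
  have hmem : ∀ x, x ∈ D ↔ breadth x ≤ n ^ 4 ^ j := fun x => Iff.rfl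
  refine ⟨D, le_trans ?_ (Nat.le_add_right _ _), le_trans ?_ (Nat.le_add_left _ _)⟩
  · have hSD : Nat.card {x : L // breadth x ≤ n} ≤
        Nat.card (LieSubmodule.toSubmodule D).toAddSubgroup :=
      Nat.card_le_card_of_injective
        (fun x => ⟨x.1, (hmem x.1).2 (x.2.trans (Nat.le_self_pow (by positivity) n))⟩)
        (fun x y h => Subtype.ext (congrArg (fun z => (z.1 : L)) h))
    have h3 := AddSubgroup.card_mul_index (LieSubmodule.toSubmodule D).toAddSubgroup
    have h4 : 0 < Nat.card (LieSubmodule.toSubmodule D).toAddSubgroup := Nat.card_pos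
    refine Nat.le_of_mul_le_mul_left ?_ h4
    rw [h3, mul_comm]
    exact hS.trans (Nat.mul_le_mul_left _ hSD)
  · refine card_closure_le D _ (Nat.one_le_pow _ _ hn1) fun x hx => ((hmem x).1 hx).trans ?_
    exact Nat.pow_le_pow_right hn1 (Nat.pow_le_pow_right (by norm_num) hj)
end

section
/- Let R be a finite (associative, not necessarily unital) ring and suppose cp(R) = ε. Then there exists a Lie-ideal D of the Lie ring (R, [·,·]) with bracket [x,y] = xy − yx, such that the index of D in (R,+) is at most f(ε) and the order of the additive subgroup generated by [D,D] is at most f(ε), where f is a universal function depending only on ε. -/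
/-!
Write `ad x` for the additive map `y ↦ x * y - y * x` and call the order of its image the breadth
of `x`. Let `X n` be the set of elements of breadth at most `n`. Breadth is submultiplicative under
sums, and the Jacobi identity bounds the breadth of `[y, x]` by the square of the breadth of `x`;
hence `X n + X m ⊆ X (n * m)` and `[R, X n] ⊆ X (n ^ 2)`.

Since `cp(R)` is the average of `1 / breadth`, taking `n ≥ 2 / ε` gives `|R| ≤ n * |X n|`
(`card_le_mul_breadthSet`). If some `a ∈ X (k ^ 4)` is not in `X k + X k`, then `X k` and `a + X k`
are disjoint subsets of `X (k ^ 5)`, so `|X (k ^ 5)| ≥ 2 * |X k|` (`subset_or_double`). Starting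
from `k = n`, this doubling can occur only boundedly often along `k ↦ k ^ 5`; so for some bounded
`k` one has `X (k ^ 4) ⊆ X k + X k ⊆ X (k ^ 2)`, and then `D = X (k ^ 2) = X (k ^ 4)` is closed
under addition and under bracketing with `R` (`exists_stable`).

Finally, a subgroup `D` all of whose elements have breadth at most `N` has `[D, D]` of bounded order
(`card_closure_le`), by the additive version of the argument for groups with boundedly finite
conjugacy classes: if `a ∈ D` maximises `|[a, D]|` and `[a, D] = {[a, b] : b ∈ B}`, then every
`c ∈ D` which centralises `B` satisfies `[c, D] ⊆ [a, D]`, and such elements form a subgroup of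
bounded index in `D`.
-/

/-- The commuting probability of a finite (not necessarily unital) ring:
the probability that two random elements commute. -/
noncomputable def ringCommProb (R : Type) [NonUnitalRing R] [Fintype R] : ℝ :=
  (Nat.card {p : R × R // p.1 * p.2 = p.2 * p.1} : ℝ) / (Nat.card R : ℝ) ^ 2

/-- The additive map `y ↦ x * y - y * x`. -/
def lieAd {R : Type} [NonUnitalRing R] (x : R) : R →+ R :=
  AddMonoidHom.mulLeft x - AddMonoidHom.mulRight x

/-- The breadth of `x`, that is, the order of the additive group `[x, R]`. -/
noncomputable def breadth {R : Type} [NonUnitalRing R] (x : R) : ℕ := Nat.card (lieAd x).range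

open Classical in
/-- The finite set of the elements of breadth at most `n`. -/
noncomputable def breadthSet (R : Type) [NonUnitalRing R] [Fintype R] (n : ℕ) : Finset R :=
  Finset.univ.filter fun x => breadth x ≤ n

/-! ### Breadth of an element -/

section Breadth

variable {R : Type} [NonUnitalRing R]

lemma lieAd_apply (x y : R) : lieAd x y = x * y - y * x := rfl

lemma lieAd_swap (x y : R) : lieAd x y = -lieAd y x := by
  simp [lieAd_apply]

lemma lieAd_add (x y z : R) : lieAd (x + y) z = lieAd x z + lieAd y z := by
  simp only [lieAd_apply, add_mul, mul_add]; abel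

lemma lieAd_sub (x y z : R) : lieAd (x - y) z = lieAd x z - lieAd y z := by
  simp only [lieAd_apply, sub_mul, mul_sub]; abel

lemma lieAd_neg (x z : R) : lieAd (-x) z = -lieAd x z := by
  simp only [lieAd_apply, neg_mul, mul_neg]; abel

lemma lieAd_jacobi (x y z : R) : lieAd (lieAd y x) z = lieAd y (lieAd x z) - lieAd x (lieAd y z) := by
  simp only [lieAd_apply, sub_mul, mul_sub, mul_assoc]; abel

lemma breadth_neg (x : R) : breadth (-x) = breadth x := by
  have key : ∀ x : R, (lieAd (-x)).range ≤ (lieAd x).range := by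
    rintro x _ ⟨z, rfl⟩
    exact ⟨-z, by rw [lieAd_neg, map_neg]⟩
  have h := key (-x)
  rw [neg_neg] at h
  rw [breadth, breadth, le_antisymm (key x) h]

lemma breadth_zero : breadth (0 : R) = 1 := by
  have : (lieAd (0 : R)).range = ⊥ := by
    rw [eq_bot_iff]
    rintro _ ⟨z, rfl⟩
    simp [lieAd_apply]
  rw [breadth, this, AddSubgroup.card_bot]

lemma card_ker_mul_breadth (x : R) : Nat.card (lieAd x).ker * breadth x = Nat.card R := by
  rw [breadth, ← AddSubgroup.index_ker, AddSubgroup.card_mul_index]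

open scoped Pointwise in
lemma card_sup_le_mul (H K : AddSubgroup R) : Nat.card ↥(H ⊔ K) ≤ Nat.card H * Nat.card K := by
  have h : ((H ⊔ K : AddSubgroup R) : Set R) = (H : Set R) + (K : Set R) := AddSubgroup.add_normal H K
  have h2 : Nat.card ((H ⊔ K : AddSubgroup R) : Set R) ≤ _ :=
    h ▸ Set.natCard_add_le (s := (H : Set R)) (t := (K : Set R))
  exact h2

variable [Fintype R]

lemma breadth_le_of_range_le {x : R} {H K : AddSubgroup R} (h : (lieAd x).range ≤ H ⊔ K) :
    breadth x ≤ Nat.card H * Nat.card K :=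
  (AddSubgroup.card_le_of_le h).trans (card_sup_le_mul H K)

lemma breadth_pos (x : R) : 0 < breadth x := Nat.card_pos

lemma breadth_add_le (x y : R) : breadth (x + y) ≤ breadth x * breadth y := by
  apply breadth_le_of_range_le
  rintro _ ⟨z, rfl⟩
  rw [lieAd_add]
  exact AddSubgroup.add_mem_sup ⟨z, rfl⟩ ⟨z, rfl⟩

lemma breadth_lie_le (x y : R) : breadth (lieAd y x) ≤ breadth x * breadth x := by
  have h : (lieAd (lieAd y x)).range ≤ (lieAd x).range.map (lieAd y) ⊔ (lieAd x).range := by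
    rintro _ ⟨z, rfl⟩
    rw [lieAd_jacobi, sub_eq_add_neg]
    exact AddSubgroup.add_mem_sup ⟨_, ⟨z, rfl⟩, rfl⟩ (neg_mem ⟨_, rfl⟩)
  refine (breadth_le_of_range_le h).trans ?_
  exact Nat.mul_le_mul_right _ (Nat.card_le_card_of_surjective _
    ((lieAd y).addSubgroupMap_surjective (lieAd x).range))

lemma mem_breadthSet {n : ℕ} {x : R} : x ∈ breadthSet R n ↔ breadth x ≤ n := by
  simp [breadthSet]

end Breadth

/-! ### Density of the elements of small breadth -/

section Density

variable {R : Type} [NonUnitalRing R] [Fintype R]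

lemma card_commuting_eq_sum :
    Nat.card {p : R × R // p.1 * p.2 = p.2 * p.1} = ∑ x : R, Nat.card (lieAd x).ker := by
  rw [← Nat.card_sigma]
  refine Nat.card_congr
    ⟨fun p => ⟨p.1.1, p.1.2, ?_⟩, fun q => ⟨(q.1, q.2.1), ?_⟩, fun _ => rfl, fun _ => rfl⟩
  · rw [AddMonoidHom.mem_ker, lieAd_apply, p.2, sub_self]
  · exact sub_eq_zero.1 q.2.2

lemma ringCommProb_pos : 0 < ringCommProb R := by
  unfold ringCommProb
  have : Nonempty {p : R × R // p.1 * p.2 = p.2 * p.1} := ⟨⟨(0, 0), rfl⟩⟩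
  have h1 : 0 < Nat.card {p : R × R // p.1 * p.2 = p.2 * p.1} := Nat.card_pos
  have h2 : 0 < Nat.card R := Nat.card_pos
  positivity

/-- Elements outside `breadthSet R n` have centralisers of order at most `|R| / n`, so they account
for at most half of the commuting pairs once `2 ≤ n * cp(R)`. -/
lemma card_le_mul_breadthSet {n : ℕ} (hn : 2 ≤ n * ringCommProb R) :
    Nat.card R ≤ n * (breadthSet R n).card := by
  classical
  have hr : 0 < (Nat.card R : ℝ) := by exact_mod_cast Nat.card_pos
  have hpt : ∀ x : R, n * Nat.card (lieAd x).ker ≤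
      Nat.card R + if x ∈ breadthSet R n then n * Nat.card R else 0 := by
    intro x
    have h := card_ker_mul_breadth x
    split_ifs with hx
    · have : Nat.card (lieAd x).ker ≤ Nat.card R := AddSubgroup.card_le_card_addGroup _
      nlinarith
    · rw [mem_breadthSet] at hx
      nlinarith
  have hsum : n * Nat.card {p : R × R // p.1 * p.2 = p.2 * p.1} ≤
      Nat.card R * Nat.card R + (breadthSet R n).card * (n * Nat.card R) := by
    rw [card_commuting_eq_sum, Finset.mul_sum]
    refine (Finset.sum_le_sum fun x _ => hpt x).trans (le_of_eq ?_)
    simp [Finset.sum_add_distrib]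
  have hc : (Nat.card {p : R × R // p.1 * p.2 = p.2 * p.1} : ℝ) =
      ringCommProb R * (Nat.card R : ℝ) ^ 2 := by
    unfold ringCommProb
    field_simp
  have hsum' : (n : ℝ) * (ringCommProb R * (Nat.card R : ℝ) ^ 2) ≤
      Nat.card R * Nat.card R + (breadthSet R n).card * (n * Nat.card R) := by
    rw [← hc]; exact_mod_cast hsum
  have h2 : (2 : ℝ) * (Nat.card R : ℝ) ^ 2 ≤ n * ringCommProb R * (Nat.card R : ℝ) ^ 2 := by gcongr
  have h3 : (Nat.card R : ℝ) * Nat.card R ≤ (n * (breadthSet R n).card) * Nat.card R := by nlinarith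
  have h4 := le_of_mul_le_mul_right h3 hr
  exact_mod_cast h4

end Density

/-! ### Stabilisation of the sets of bounded breadth -/

section Stable

variable {R : Type} [NonUnitalRing R] [Fintype R]

lemma breadthSet_mono {m n : ℕ} (h : m ≤ n) : breadthSet R m ⊆ breadthSet R n := by
  intro x
  simp only [mem_breadthSet]
  exact fun hx => hx.trans h

lemma add_mem_breadthSet {m n : ℕ} {x y : R} (hx : x ∈ breadthSet R m) (hy : y ∈ breadthSet R n) :
    x + y ∈ breadthSet R (m * n) := by
  rw [mem_breadthSet] at *
  exact (breadth_add_le x y).trans (Nat.mul_le_mul hx hy)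

/-- If `a ∈ X (k ^ 4)` is not a sum of two elements of the symmetric set `X k`, then `X k` and
`a + X k` are disjoint subsets of `X (k ^ 5)`. -/
lemma subset_or_double (k : ℕ) :
    breadthSet R (k ^ 4) ⊆ breadthSet R (k ^ 2) ∨
      2 * (breadthSet R k).card ≤ (breadthSet R (k ^ 5)).card := by
  classical
  by_cases h : ∀ a ∈ breadthSet R (k ^ 4), ∃ x ∈ breadthSet R k, ∃ y ∈ breadthSet R k, a = x + y
  · left
    intro a ha
    obtain ⟨x, hx, y, hy, rfl⟩ := h a ha
    rw [pow_two]
    exact add_mem_breadthSet hx hy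
  · right
    push Not at h
    obtain ⟨a, ha, hne⟩ := h
    have hdisj : Disjoint (breadthSet R k) ((breadthSet R k).image (a + ·)) := by
      rw [Finset.disjoint_left]
      intro x hx hx'
      obtain ⟨y, hy, rfl⟩ := Finset.mem_image.1 hx'
      refine hne _ hx (-y) ?_ (by simp)
      rw [mem_breadthSet, breadth_neg]
      exact mem_breadthSet.1 hy
    have hsub : breadthSet R k ∪ (breadthSet R k).image (a + ·) ⊆ breadthSet R (k ^ 5) := by
      apply Finset.union_subset (breadthSet_mono (Nat.le_self_pow (by norm_num) k))
      intro z hz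
      obtain ⟨y, hy, rfl⟩ := Finset.mem_image.1 hz
      rw [pow_succ]
      exact add_mem_breadthSet ha hy
    have hcard := Finset.card_le_card hsub
    rw [Finset.card_union_of_disjoint hdisj,
      Finset.card_image_of_injective _ (add_right_injective a)] at hcard
    omega

/-- The sets `X (n ^ 5 ^ i)` cannot double `n` times, because `X n` already has density at least
`1 / n`. -/
lemma exists_stable {n : ℕ} (hn : 1 ≤ n) (hd : Nat.card R ≤ n * (breadthSet R n).card) :
    ∃ k, n ≤ k ∧ k ≤ n ^ 5 ^ n ∧ breadthSet R (k ^ 4) ⊆ breadthSet R (k ^ 2) := by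
  by_contra! hcon
  have hle : ∀ i, n ≤ n ^ 5 ^ i := fun i => Nat.le_self_pow (by positivity) n
  have key : ∀ i ≤ n, 2 ^ i * (breadthSet R n).card ≤ (breadthSet R (n ^ 5 ^ i)).card := by
    intro i
    induction i with
    | zero => simp
    | succ i ih =>
      intro hi
      have h1 := ih (by omega)
      have h2 := (subset_or_double (R := R) (n ^ 5 ^ i)).resolve_left
        (hcon _ (hle i)
          (Nat.pow_le_pow_right hn (Nat.pow_le_pow_right (by norm_num) (by omega))))
      rw [← pow_mul, ← pow_succ] at h2
      rw [pow_succ]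
      linarith
  have h1 := key n le_rfl
  have h2 : (breadthSet R (n ^ 5 ^ n)).card ≤ Nat.card R := by
    rw [Nat.card_eq_fintype_card]; exact Finset.card_le_univ _
  have h3 : 0 < (breadthSet R n).card :=
    Finset.card_pos.2 ⟨0, mem_breadthSet.2 (by rw [breadth_zero]; exact hn)⟩
  have h4 : n < 2 ^ n := Nat.lt_two_pow_self
  nlinarith

end Stable

/-! ### Subgroups of bounded breadth have few commutators -/

section BoundedBreadth

variable {R : Type} [NonUnitalRing R] [Fintype R]

/-- A choice of one preimage for each value of `f` on `s`. -/
lemma exists_section {α β : Type*} [DecidableEq β] (f : α → β) (s : Finset α) :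
    ∃ t ⊆ s, t.card ≤ (s.image f).card ∧ ∀ x ∈ s, ∃ y ∈ t, f y = f x := by
  classical
  have h : ∀ y : {y // y ∈ s.image f}, ∃ x ∈ s, f x = y.1 := fun y => Finset.mem_image.1 y.2
  choose g hg hfg using h
  refine ⟨(s.image f).attach.image g, ?_, ?_, ?_⟩
  · intro x hx
    obtain ⟨y, -, rfl⟩ := Finset.mem_image.1 hx
    exact hg y
  · exact Finset.card_image_le.trans (by simp)
  · intro x hx
    exact ⟨g ⟨f x, Finset.mem_image_of_mem f hx⟩,
      Finset.mem_image_of_mem _ (Finset.mem_attach _ _), hfg _⟩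

lemma card_finset_sup_le (H : R → AddSubgroup R) (N : ℕ) (T : Finset R)
    (h : ∀ t ∈ T, Nat.card (H t) ≤ N) : Nat.card ↥(T.sup H) ≤ N ^ T.card := by
  classical
  induction T using Finset.induction_on with
  | empty => simp
  | insert a s ha ih =>
    rw [Finset.sup_insert, Finset.card_insert_of_notMem ha, pow_succ, mul_comm]
    exact (card_sup_le_mul _ _).trans (Nat.mul_le_mul (h a (Finset.mem_insert_self a s))
      (ih fun t ht => h t (Finset.mem_insert_of_mem ht)))

/-- The additive analogue of the theorem that groups with boundedly finite conjugacy classes have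
a derived subgroup of bounded order. -/
lemma card_closure_le (D : AddSubgroup R) (N : ℕ) (hD : ∀ x ∈ D, breadth x ≤ N) :
    Nat.card (AddSubgroup.closure {z : R | ∃ x ∈ D, ∃ y ∈ D, z = x * y - y * x}) ≤
      N * N ^ N ^ N := by
  classical
  have hN : 1 ≤ N := (breadth_pos (0 : R)).trans_le (hD 0 D.zero_mem)
  have hW : ∀ x ∈ D, Nat.card (D.map (lieAd x)) ≤ N := fun x hx =>
    (AddSubgroup.card_le_of_le (by rintro _ ⟨y, -, rfl⟩; exact ⟨y, rfl⟩)).trans (hD x hx)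
  let S : Finset R := Finset.univ.filter (· ∈ D)
  have hS : ∀ x, x ∈ S ↔ x ∈ D := by simp [S]
  have himg : ∀ x ∈ D, (S.image (lieAd x)).card ≤ N := by
    intro x hx
    refine le_trans (le_of_eq ?_) (hW x hx)
    have : ((S.image (lieAd x) : Finset R) : Set R) = (D.map (lieAd x) : AddSubgroup R) := by
      ext z; simp [hS]
    rw [← Set.ncard_coe_finset, this]
    rfl
  obtain ⟨a, haS, hmax⟩ := S.exists_max_image (fun x => Nat.card (D.map (lieAd x)))
    ⟨0, (hS 0).2 D.zero_mem⟩
  have ha := (hS a).1 haS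
  obtain ⟨B, hBS, hBcard, hB⟩ := exists_section (lieAd a) S
  obtain ⟨T, hTS, hTcard, hT⟩ := exists_section (fun x => fun b : B => lieAd x (b : R)) S
  have hTN : T.card ≤ N ^ N := by
    have hsub : S.image (fun x => fun b : B => lieAd x (b : R)) ⊆
        Fintype.piFinset fun b : B => S.image fun x => lieAd x (b : R) := by
      intro g hg
      obtain ⟨x, hx, rfl⟩ := Finset.mem_image.1 hg
      exact Fintype.mem_piFinset.2 fun b => Finset.mem_image_of_mem (fun x => lieAd x (b : R)) hx
    have hswap : ∀ b : B, (S.image fun x => lieAd x (b : R)).card ≤ N := by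
      intro b
      have : (S.image fun x => lieAd x (b : R)) = (S.image (lieAd (b : R))).image (fun z => -z) := by
        rw [Finset.image_image]
        exact Finset.image_congr fun x _ => lieAd_swap x b
      rw [this]
      exact Finset.card_image_le.trans (himg b ((hS b).1 (hBS b.2)))
    calc T.card ≤ _ := hTcard
      _ ≤ _ := Finset.card_le_card hsub
      _ = ∏ b : B, (S.image fun x => lieAd x (b : R)).card := Fintype.card_piFinset _
      _ ≤ ∏ _b : B, N := Finset.prod_le_prod' fun b _ => hswap b
      _ = N ^ B.card := by simp
      _ ≤ N ^ N := Nat.pow_le_pow_right hN (hBcard.trans (himg a ha))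
  -- By maximality of `[a, D]`, an element `c` centralising `B` has `[a + c, D] = [a, D]`.
  have hC : ∀ c ∈ D, (∀ b ∈ B, lieAd c b = 0) → ∀ y ∈ D, lieAd c y ∈ D.map (lieAd a) := by
    intro c hc hcB y hy
    have hle : D.map (lieAd a) ≤ D.map (lieAd (a + c)) := by
      rintro _ ⟨x, hx, rfl⟩
      obtain ⟨b, hb, hbx⟩ := hB x ((hS x).2 hx)
      refine ⟨b, (hS b).1 (hBS hb), ?_⟩
      rw [lieAd_add, hcB b hb, add_zero, hbx]
    have heq := AddSubgroup.eq_of_le_of_card_ge hle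
      (hmax (a + c) ((hS _).2 (D.add_mem ha hc)))
    have h1 : lieAd (a + c) y ∈ D.map (lieAd a) := heq ▸ ⟨y, hy, rfl⟩
    have h2 : lieAd a y ∈ D.map (lieAd a) := ⟨y, hy, rfl⟩
    have h3 := sub_mem h1 h2
    rwa [lieAd_add, add_sub_cancel_left] at h3
  have hcl : AddSubgroup.closure {z : R | ∃ x ∈ D, ∃ y ∈ D, z = x * y - y * x} ≤
      D.map (lieAd a) ⊔ T.sup fun t => D.map (lieAd t) := by
    rw [AddSubgroup.closure_le]
    rintro _ ⟨x, hx, y, hy, rfl⟩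
    obtain ⟨t, ht, htx⟩ := hT x ((hS x).2 hx)
    have htD := (hS t).1 (hTS ht)
    have h1 : lieAd (x - t) y ∈ D.map (lieAd a) := by
      refine hC _ (D.sub_mem hx htD) (fun b hb => ?_) y hy
      rw [lieAd_sub, sub_eq_zero]
      exact (congrFun htx ⟨b, hb⟩).symm
    have h2 : lieAd t y ∈ T.sup fun t => D.map (lieAd t) :=
      Finset.le_sup (f := fun t => D.map (lieAd t)) ht ⟨y, hy, rfl⟩
    have h3 := AddSubgroup.add_mem_sup h1 h2
    rwa [lieAd_sub, sub_add_cancel] at h3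
  refine (AddSubgroup.card_le_of_le hcl).trans ((card_sup_le_mul _ _).trans ?_)
  refine Nat.mul_le_mul (hW a ha) ((card_finset_sup_le _ N T fun t ht =>
    hW t ((hS t).1 (hTS ht))).trans (Nat.pow_le_pow_right hN hTN))

end BoundedBreadth

/-- **Neumann's theorem for finite rings.**  There is a universal function
`f : ℝ → ℕ` such that for every finite ring `R` with `cp(R) = ε` there is a
Lie-ideal `D` of the Lie ring `(R, [·,·])` (an additive subgroup closed under
commutation with arbitrary ring elements) whose additive index is at most `f ε`
and such that the additive subgroup generated by the commutators
`x * y - y * x` with `x, y ∈ D` has order at most `f ε`. -/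
theorem ring_commProb_neumann :
    ∃ f : ℝ → ℕ, ∀ (R : Type) [NonUnitalRing R] [Fintype R] (ε : ℝ),
      ringCommProb R = ε →
      ∃ D : AddSubgroup R,
        (∀ (x : R), ∀ d ∈ D, x * d - d * x ∈ D) ∧
        D.index ≤ f ε ∧
        Nat.card
          (AddSubgroup.closure {z : R | ∃ x ∈ D, ∃ y ∈ D, z = x * y - y * x}) ≤ f ε := by
  -- With `n = ⌈2 / ε⌉` and `M = n ^ 5 ^ n`, the index of `D` is at most `n` and all breadths in `D`
  -- are at most `M ^ 2`.
  refine ⟨fun ε => max ⌈2 / ε⌉₊ (((⌈2 / ε⌉₊ ^ 5 ^ ⌈2 / ε⌉₊) ^ 2) *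
    ((⌈2 / ε⌉₊ ^ 5 ^ ⌈2 / ε⌉₊) ^ 2) ^
      ((⌈2 / ε⌉₊ ^ 5 ^ ⌈2 / ε⌉₊) ^ 2) ^ ((⌈2 / ε⌉₊ ^ 5 ^ ⌈2 / ε⌉₊) ^ 2)), ?_⟩
  rintro R _ _ ε rfl
  have hε := ringCommProb_pos (R := R)
  beta_reduce
  set n := ⌈2 / ringCommProb R⌉₊ with hndef
  have hn : 1 ≤ n := Nat.ceil_pos.2 (by positivity)
  have hd : Nat.card R ≤ n * (breadthSet R n).card :=
    card_le_mul_breadthSet ((div_le_iff₀ hε).1 (Nat.le_ceil _))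
  obtain ⟨k, hnk, hk, hsub⟩ := exists_stable hn hd
  have hk1 : 1 ≤ k := hn.trans hnk
  let D : AddSubgroup R :=
    { carrier := breadthSet R (k ^ 2)
      zero_mem' := mem_breadthSet.2 (by rw [breadth_zero]; exact Nat.one_le_pow _ _ hk1)
      add_mem' := fun {x y} hx hy => hsub (by
        have := add_mem_breadthSet (R := R) (Finset.mem_coe.1 hx) (Finset.mem_coe.1 hy)
        rwa [← pow_add] at this)
      neg_mem' := fun {x} hx => mem_breadthSet.2 (by
        rw [breadth_neg]; exact mem_breadthSet.1 hx) }
  have hmem : ∀ x, x ∈ D ↔ x ∈ breadthSet R (k ^ 2) := fun x => Iff.rfl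
  refine ⟨D, ?_, ?_, ?_⟩
  · intro x d hd'
    have hb := mem_breadthSet.1 ((hmem d).1 hd')
    refine hsub (mem_breadthSet.2 ((breadth_lie_le d x).trans ?_))
    calc breadth d * breadth d ≤ k ^ 2 * k ^ 2 := Nat.mul_le_mul hb hb
      _ = k ^ 4 := by ring
  · refine le_max_of_le_left ?_
    have h1 : Nat.card D = (breadthSet R (k ^ 2)).card := by
      have : Nat.card D = Nat.card (breadthSet R (k ^ 2)) := rfl
      rw [this, Nat.card_eq_fintype_card, Fintype.card_coe]
    have h2 : (breadthSet R n).card ≤ Nat.card D := by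
      rw [h1]
      exact Finset.card_le_card (breadthSet_mono (hnk.trans (Nat.le_self_pow (by norm_num) k)))
    have h3 := D.card_mul_index
    have h4 : 0 < Nat.card D := Nat.card_pos
    have h5 : Nat.card D * D.index ≤ Nat.card D * n := by
      rw [h3, mul_comm]
      exact hd.trans (Nat.mul_le_mul_left n h2)
    exact Nat.le_of_mul_le_mul_left h5 h4
  · refine le_max_of_le_right (card_closure_le D _ fun x hx => ?_)
    exact (mem_breadthSet.1 ((hmem x).1 hx)).trans (Nat.pow_le_pow_left hk 2)
end

section
/- Let R be a finite (associative, not necessarily unital) ring such that zp(R) = ε. Then there exists a two-sided ideal D of R such that the index of D in (R,+) is at most f(ε) and the cardinality of the set D² = {d₁d₂ : d₁, d₂ ∈ D} is at most f(ε), where f is a universal function depending only on ε. -/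
/-!
Write `M = ⌈2/ε⌉`. Counting the pairs with `x * y = 0` row by row shows that the set `X` of all `x`
with `|x R| ≤ M` has at least `|R| / M` elements (`card_le_mul_ncard_small`). This set is stable
under negation and under multiplication by ring elements on either side, so the additive subgroup
`A` it generates is a two-sided ideal, of index at most `M`. A large symmetric subset generates in
boundedly many steps (`closure_subset_of_large`), so every element of `A` is a sum of boundedly many
elements of `X`, whence `|x R| ≤ K` for all `x ∈ A`, with `K = M ^ (3 M)`. The same argument on the
other side gives an ideal `B` with `|R x| ≤ K` for all `x ∈ B`.

On `D = A ⊓ B`, B. H. Neumann's argument for groups with boundedly finite conjugacy classes applies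
(`neumann_biadditive`). Choose `v ∈ D` with `U = v D` of maximal size, and for each `u ∈ U` some
`b u ∈ D` with `v * b u = u`. If `w ∈ D` kills all the `b u`, then `(v + w) D ⊇ U`, so equality holds
by maximality and `w D ⊆ U`. Such `w` form a subgroup of index at most `K ^ K` in `D`, hence the set
of products is covered by `K ^ K` sets of the form `d D + U`.

All of this but the ideal property holds for biadditive maps `β`, and the statements for the two
sides are obtained from multiplication and its flip.
-/

/-- The zero-probability of a finite (not necessarily unital) ring:
the probability that the product of two random elements is zero. -/
noncomputable def ringZeroProb (R : Type) [NonUnitalRing R] [Fintype R] : ℝ :=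
  (Nat.card {p : R × R // p.1 * p.2 = 0} : ℝ) / (Nat.card R : ℝ) ^ 2

open scoped Pointwise

/-- If `S n` is a filtration with `S n + S 1 ⊆ S (n + 1)` and `S 1` is symmetric of density at least
`1 / M`, then the subgroup generated by `S 1` is contained in `S (3 M)`: as long as `S (3 j)` is not
stable under adding `S 1`, the set `S (3 j + 2)` contains a translate of `S 1` disjoint from
`S (3 j - 1)`, and this can happen at most `M` times. -/
lemma closure_subset_of_large {G : Type*} [AddCommGroup G] [Finite G] (S : ℕ → Set G) (M : ℕ)
    (h0 : ∀ n, (0 : G) ∈ S n) (hneg : ∀ x ∈ S 1, -x ∈ S 1)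
    (hadd : ∀ n, ∀ x ∈ S n, ∀ y ∈ S 1, x + y ∈ S (n + 1))
    (hM : Nat.card G ≤ M * (S 1).ncard) :
    (AddSubgroup.closure (S 1) : Set G) ⊆ S (3 * M) := by
  have hmono : Monotone S := by
    refine monotone_nat_of_le_succ fun n x hx => ?_
    simpa using hadd n x hx 0 (h0 1)
  by_cases hst : ∃ j ≤ M, ∀ x ∈ S (3 * j), ∀ y ∈ S 1, x + y ∈ S (3 * j)
  · obtain ⟨j, hj, hs⟩ := hst
    refine Set.Subset.trans ?_ (hmono (Nat.mul_le_mul_left 3 hj))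
    intro x hx
    induction hx using AddSubgroup.closure_induction_right with
    | zero => exact h0 _
    | add_right x _ y hy ih => exact hs x ih y hy
    | add_neg_cancel x _ y hy ih => exact hs x ih _ (hneg y hy)
  · push Not at hst
    exfalso
    have key : ∀ j ≤ M, (j + 1) * (S 1).ncard ≤ (S (3 * j + 2)).ncard := by
      intro j
      induction j with
      | zero =>
        intro _
        simpa using Set.ncard_le_ncard (hmono (show 1 ≤ 2 by norm_num)) (Set.toFinite _)
      | succ j ih =>
        intro hj
        obtain ⟨a, ha, x, hx, hax⟩ := hst (j + 1) hj
        have hg : a + x ∈ S (3 * (j + 1) + 1) := hadd _ a ha x hx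
        have hdisj : Disjoint (S (3 * j + 2)) ((a + x + ·) '' S 1) := by
          rw [Set.disjoint_left]
          rintro z hz ⟨y, hy, rfl⟩
          apply hax
          have := hadd _ _ hz (-y) (hneg y hy)
          simpa [show 3 * j + 2 + 1 = 3 * (j + 1) by ring] using this
        have hsub : S (3 * j + 2) ∪ ((a + x + ·) '' S 1) ⊆ S (3 * (j + 1) + 2) := by
          apply Set.union_subset (hmono (by omega))
          rintro _ ⟨y, hy, rfl⟩
          exact hadd _ _ hg y hy
        have h1 := Set.ncard_le_ncard hsub (Set.toFinite _)
        rw [Set.ncard_union_eq hdisj (Set.toFinite _) (Set.toFinite _),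
          Set.ncard_image_of_injective _ (add_right_injective (a + x))] at h1
        have := ih (by omega)
        rw [add_mul (j + 1) 1, one_mul]
        omega
    have h1 := key M le_rfl
    have h2 : (S (3 * M + 2)).ncard ≤ Nat.card G := Set.ncard_le_card _
    have h3 : 0 < (S 1).ncard := (Set.ncard_pos (Set.toFinite _)).2 ⟨0, h0 1⟩
    rw [add_mul, one_mul] at h1
    omega

/-- The elements `x` for which `β x` has at most `N` values. -/
def smallSet {G : Type*} [AddCommGroup G] (β : G →+ G →+ G) (N : ℕ) : Set G :=
  {x | (Set.range (β x)).ncard ≤ N}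

/-- If at least a proportion `2 / M` of all pairs is killed by `β`, then at least a proportion
`1 / M` of all `x` have `|range (β x)| ≤ M`. -/
lemma card_le_mul_ncard_small {G : Type*} [AddCommGroup G] [Finite G] (β : G →+ G →+ G) (M : ℕ)
    (h : 2 * Nat.card G ^ 2 ≤ M * Nat.card {p : G × G // β p.1 p.2 = 0}) :
    Nat.card G ≤ M * (smallSet β M).ncard := by
  classical
  have := Fintype.ofFinite G
  have hsum : Nat.card {p : G × G // β p.1 p.2 = 0} = ∑ x, Nat.card (β x).ker := by
    let e : {p : G × G // β p.1 p.2 = 0} ≃ Σ x, (β x).ker :=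
      { toFun := fun p => ⟨p.1.1, p.1.2, p.2⟩
        invFun := fun p => ⟨(p.1, p.2.1), p.2.2⟩
        left_inv := fun _ => rfl
        right_inv := fun _ => rfl }
    rw [Nat.card_congr e, Nat.card_sigma]
  have hker : ∀ x, Nat.card (β x).ker * (Set.range (β x)).ncard = Nat.card G := by
    intro x
    have h1 := AddSubgroup.card_mul_index (β x).ker
    rw [AddSubgroup.index_ker] at h1
    exact h1
  by_contra! hlt
  have hle : ∀ x, M * Nat.card (β x).ker ≤
      Nat.card G + if x ∈ smallSet β M then M * Nat.card G else 0 := by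
    intro x
    split_ifs with hx
    · have : Nat.card (β x).ker ≤ Nat.card G := Nat.le_of_dvd Nat.card_pos ⟨_, (hker x).symm⟩
      nlinarith [Nat.zero_le (Nat.card G)]
    · have hx' : M < (Set.range (β x)).ncard := not_le.1 hx
      have := hker x
      nlinarith [Nat.zero_le (Nat.card (β x).ker)]
  have htot := Finset.sum_le_sum fun x (_ : x ∈ Finset.univ) => hle x
  rw [← Finset.mul_sum, ← hsum, Finset.sum_add_distrib, ← Finset.sum_filter, Finset.sum_const,
    Finset.sum_const, Finset.card_univ, ← Nat.card_eq_fintype_card, smul_eq_mul, smul_eq_mul,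
    ← Set.ncard_coe_finset] at htot
  have hset : ((Finset.univ.filter (· ∈ smallSet β M) : Finset G) : Set G) = smallSet β M := by
    ext; simp
  rw [hset] at htot
  have hpos : 0 < Nat.card G := Nat.card_pos
  nlinarith

/-- `smallSet β M` generates a subgroup of index at most `M` on which the ranges are bounded. -/
lemma closure_small {G : Type*} [AddCommGroup G] [Finite G] (β : G →+ G →+ G) (M : ℕ) (hM1 : 1 ≤ M)
    (h : 2 * Nat.card G ^ 2 ≤ M * Nat.card {p : G × G // β p.1 p.2 = 0}) :
    (AddSubgroup.closure (smallSet β M)).index ≤ M ∧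
      ∀ x ∈ AddSubgroup.closure (smallSet β M), (Set.range (β x)).ncard ≤ M ^ (3 * M) := by
  have hlarge := card_le_mul_ncard_small β M h
  constructor
  · set A := AddSubgroup.closure (smallSet β M)
    have h1 : (smallSet β M).ncard ≤ Nat.card A :=
      Set.ncard_le_ncard AddSubgroup.subset_closure (Set.toFinite _)
    have h2 := A.card_mul_index
    have h3 : 0 < Nat.card A := Nat.card_pos
    have h4 : Nat.card A * A.index ≤ Nat.card A * M := by nlinarith
    exact Nat.le_of_mul_le_mul_left h4 h3
  · have := closure_subset_of_large (fun n => smallSet β (M ^ n)) M ?_ ?_ ?_ (by simpa using hlarge)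
    · intro x hx
      exact this (by simpa using hx)
    · intro n
      have : Set.range (β 0) = {0} := by ext; simp [eq_comm]
      simp only [smallSet, Set.mem_ofPred_eq, this, Set.ncard_singleton]
      exact Nat.one_le_pow _ _ hM1
    · intro x hx
      have : Set.range (β (-x)) = -Set.range (β x) := by
        ext z; simp [neg_eq_iff_eq_neg]
      simp only [smallSet, Set.mem_ofPred_eq, this] at hx ⊢
      exact (Set.natCard_neg _).trans_le hx
    · intro n x hx y hy
      have hsub : Set.range (β (x + y)) ⊆ Set.range (β x) + Set.range (β y) := by
        rintro _ ⟨z, rfl⟩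
        exact ⟨_, ⟨z, rfl⟩, _, ⟨z, rfl⟩, by simp⟩
      simp only [smallSet, Set.mem_ofPred_eq, pow_one] at hx hy ⊢
      calc _ ≤ _ := Set.ncard_le_ncard hsub (Set.toFinite _)
        _ ≤ _ := Set.natCard_add_le
        _ ≤ M ^ n * M := Nat.mul_le_mul hx hy
        _ = _ := (pow_succ _ _).symm

/-- Neumann's argument: a biadditive map all of whose partial maps have at most `K` values has a
bounded number of values in total. -/
lemma neumann_biadditive {H G : Type*} [AddCommGroup H] [AddCommGroup G] [Finite H] [Finite G]
    (β : H →+ H →+ G) (K : ℕ) (hl : ∀ x, (Set.range (β x)).ncard ≤ K)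
    (hr : ∀ y, (Set.range (β.flip y)).ncard ≤ K) :
    {z : G | ∃ x y, z = β x y}.ncard ≤ K ^ K * (K * K) := by
  classical
  obtain ⟨v, hv⟩ := Finite.exists_max fun x => (Set.range (β x)).ncard
  set U := Set.range (β v) with hU
  have hK : 0 < K := lt_of_lt_of_le
    ((Set.ncard_pos (Set.toFinite _)).2 (Set.range_nonempty (β v))) (hl v)
  have hb : ∀ u : U, ∃ b, β v b = u := fun u => u.2
  choose b hb using hb
  have key : ∀ w, (∀ u, β w (b u) = 0) → ∀ y, β w y ∈ U := by
    intro w hw y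
    have hsub : U ⊆ Set.range (β (v + w)) := by
      intro u hu
      exact ⟨b ⟨u, hu⟩, by simp [hw, hb]⟩
    have heq := Set.eq_of_subset_of_ncard_le hsub (hv (v + w)) (Set.toFinite _)
    have h1 : β (v + w) y ∈ (β v).range := by
      have : β (v + w) y ∈ U := heq ▸ ⟨y, rfl⟩
      exact this
    have h2 : β v y ∈ (β v).range := ⟨y, rfl⟩
    have := sub_mem h1 h2
    rw [map_add, AddMonoidHom.add_apply, add_sub_cancel_left] at this
    exact this
  have := Fintype.ofFinite U
  -- the class of `x` modulo the subgroup of all `w` killing every `b u`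
  let φ : H → (∀ u : U, Set.range (β.flip (b u))) := fun x u => ⟨β x (b u), x, rfl⟩
  have := Fintype.ofFinite (∀ u : U, Set.range (β.flip (b u)))
  let s := Function.invFun φ
  have hs : ∀ x u, β (s (φ x)) (b u) = β x (b u) := by
    intro x u
    have : φ (s (φ x)) = φ x := Function.invFun_eq ⟨x, rfl⟩
    exact congrArg Subtype.val (congrFun this u)
  have hcov : {z : G | ∃ x y, z = β x y} ⊆ ⋃ p, (Set.range (β (s p)) + U) := by
    rintro _ ⟨x, y, rfl⟩
    refine Set.mem_iUnion.2 ⟨φ x, _, ⟨y, rfl⟩, β (x - s (φ x)) y, key _ ?_ y, ?_⟩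
    · intro u
      simp [hs]
    · simp
  have hcard : Fintype.card (∀ u : U, Set.range (β.flip (b u))) ≤ K ^ K := by
    rw [← Nat.card_eq_fintype_card, Nat.card_pi]
    calc _ ≤ ∏ _u : U, K := Finset.prod_le_prod' fun u _ => hr (b u)
      _ = K ^ U.ncard := by
        rw [Finset.prod_const, Finset.card_univ, ← Nat.card_eq_fintype_card]; rfl
      _ ≤ _ := Nat.pow_le_pow_right hK (hl v)
  calc _ ≤ _ := Set.ncard_le_ncard hcov (Set.toFinite _)
    _ ≤ ∑ p, (Set.range (β (s p)) + U).ncard := Set.ncard_iUnion_le_of_fintype _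
    _ ≤ ∑ _p : (∀ u : U, Set.range (β.flip (b u))), K * K :=
      Finset.sum_le_sum fun p _ => Set.natCard_add_le.trans (Nat.mul_le_mul (hl _) (hl v))
    _ ≤ _ := by
      rw [Finset.sum_const, Finset.card_univ, smul_eq_mul]
      exact Nat.mul_le_mul_right _ hcard

/-- The subgroup generated by a set absorbing multiplication on both sides is a two-sided ideal. -/
lemma closure_absorbs {R : Type*} [NonUnitalRing R] (X : Set R)
    (hX : ∀ x ∈ X, ∀ r : R, r * x ∈ X ∧ x * r ∈ X) :
    ∀ x ∈ AddSubgroup.closure X, ∀ r : R,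
      r * x ∈ AddSubgroup.closure X ∧ x * r ∈ AddSubgroup.closure X := by
  intro x hx r
  induction hx using AddSubgroup.closure_induction with
  | mem x hx =>
    exact ⟨AddSubgroup.subset_closure (hX x hx r).1, AddSubgroup.subset_closure (hX x hx r).2⟩
  | zero => simp
  | add x y _ _ hx hy =>
    rw [mul_add, add_mul]
    exact ⟨add_mem hx.1 hy.1, add_mem hx.2 hy.2⟩
  | neg x _ hx =>
    rw [mul_neg, neg_mul]
    exact ⟨neg_mem hx.1, neg_mem hx.2⟩

lemma small_left_absorbs {R : Type*} [NonUnitalRing R] [Finite R] (M : ℕ) :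
    ∀ x ∈ smallSet (AddMonoidHom.mul : R →+ R →+ R) M, ∀ r : R,
      r * x ∈ smallSet (AddMonoidHom.mul : R →+ R →+ R) M ∧
      x * r ∈ smallSet (AddMonoidHom.mul : R →+ R →+ R) M := by
  intro x hx r
  constructor
  · have : Set.range (AddMonoidHom.mul (r * x)) = (r * ·) '' Set.range (AddMonoidHom.mul x) := by
      ext; simp [mul_assoc]
    simp only [smallSet, Set.mem_ofPred_eq, this]
    exact (Set.ncard_image_le (Set.toFinite _)).trans hx
  · refine (Set.ncard_le_ncard ?_ (Set.toFinite _)).trans hx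
    rintro _ ⟨y, rfl⟩
    exact ⟨r * y, by simp [mul_assoc]⟩

lemma small_right_absorbs {R : Type*} [NonUnitalRing R] [Finite R] (M : ℕ) :
    ∀ x ∈ smallSet (AddMonoidHom.mul : R →+ R →+ R).flip M, ∀ r : R,
      r * x ∈ smallSet (AddMonoidHom.mul : R →+ R →+ R).flip M ∧
      x * r ∈ smallSet (AddMonoidHom.mul : R →+ R →+ R).flip M := by
  intro x hx r
  constructor
  · refine (Set.ncard_le_ncard ?_ (Set.toFinite _)).trans hx
    rintro _ ⟨y, rfl⟩
    exact ⟨y * r, by simp [mul_assoc]⟩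
  · have : Set.range ((AddMonoidHom.mul : R →+ R →+ R).flip (x * r)) =
        (· * r) '' Set.range ((AddMonoidHom.mul : R →+ R →+ R).flip x) := by
      ext; simp [mul_assoc]
    simp only [smallSet, Set.mem_ofPred_eq, this]
    exact (Set.ncard_image_le (Set.toFinite _)).trans hx

/-- **Neumann-type theorem for the zero-probability.**  There is a universal
function `f : ℝ → ℕ` such that for every finite ring `R` with `zp(R) = ε` there
is a two-sided ideal `D` of `R` whose additive index is at most `f ε` and such
that the set `D² = {d₁ * d₂ : d₁, d₂ ∈ D}` has cardinality at most `f ε`. -/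
theorem ring_zeroProb_neumann :
    ∃ f : ℝ → ℕ, ∀ (R : Type) [NonUnitalRing R] [Fintype R] (ε : ℝ),
      ringZeroProb R = ε →
      ∃ D : AddSubgroup R,
        (∀ d ∈ D, ∀ r : R, r * d ∈ D ∧ d * r ∈ D) ∧
        D.index ≤ f ε ∧
        Nat.card {z : R | ∃ d₁ ∈ D, ∃ d₂ ∈ D, z = d₁ * d₂} ≤ f ε := by
  let M : ℝ → ℕ := fun ε => ⌈2 / ε⌉₊
  let K : ℝ → ℕ := fun ε => M ε ^ (3 * M ε)
  refine ⟨fun ε => M ε * M ε + K ε ^ K ε * (K ε * K ε), ?_⟩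
  intro R _ _ ε hε
  have hR : (0 : ℝ) < Nat.card R := by exact_mod_cast Nat.card_pos
  have hZ : 0 < Nat.card {p : R × R // p.1 * p.2 = 0} :=
    have : Nonempty {p : R × R // p.1 * p.2 = 0} := ⟨⟨(0, 0), by simp⟩⟩
    Nat.card_pos
  have hεpos : 0 < ε := by
    rw [← hε, ringZeroProb]
    have : (0 : ℝ) < Nat.card {p : R × R // p.1 * p.2 = 0} := by exact_mod_cast hZ
    positivity
  have hM1 : 1 ≤ M ε := Nat.ceil_pos.2 (by positivity)
  have hcount : 2 * Nat.card R ^ 2 ≤ M ε * Nat.card {p : R × R // p.1 * p.2 = 0} := by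
    have h1 : 2 / ε ≤ M ε := Nat.le_ceil _
    rw [div_le_iff₀ hεpos] at h1
    have h2 : (Nat.card {p : R × R // p.1 * p.2 = 0} : ℝ) = ε * (Nat.card R : ℝ) ^ 2 := by
      rw [← hε, ringZeroProb]
      field_simp
    have h3 : (2 : ℝ) * (Nat.card R : ℝ) ^ 2 ≤
        M ε * (Nat.card {p : R × R // p.1 * p.2 = 0} : ℝ) := by
      rw [h2, ← mul_assoc]
      exact mul_le_mul_of_nonneg_right h1 (by positivity)
    exact_mod_cast h3
  let μ : R →+ R →+ R := AddMonoidHom.mul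
  have hswap : Nat.card {p : R × R // p.1 * p.2 = 0} =
      Nat.card {p : R × R // μ.flip p.1 p.2 = 0} :=
    Nat.card_congr ((Equiv.prodComm R R).subtypeEquiv fun p => by simp [μ])
  obtain ⟨hAi, hAb⟩ := closure_small μ (M ε) hM1 hcount
  obtain ⟨hBi, hBb⟩ := closure_small μ.flip (M ε) hM1 (hswap ▸ hcount)
  set A := AddSubgroup.closure (smallSet μ (M ε))
  set B := AddSubgroup.closure (smallSet μ.flip (M ε))
  have hA := closure_absorbs _ (small_left_absorbs (R := R) (M ε))
  have hB := closure_absorbs _ (small_right_absorbs (R := R) (M ε))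
  refine ⟨A ⊓ B, ?_, ?_, ?_⟩
  · intro d hd r
    exact ⟨⟨(hA d hd.1 r).1, (hB d hd.2 r).1⟩, ⟨(hA d hd.1 r).2, (hB d hd.2 r).2⟩⟩
  · calc _ ≤ A.index * B.index := AddSubgroup.index_inf_le
      _ ≤ M ε * M ε := Nat.mul_le_mul hAi hBi
      _ ≤ _ := Nat.le_add_right _ _
  · let D := A ⊓ B
    let β : D →+ D →+ R := (μ.comp D.subtype).compl₂ D.subtype
    have hβ : ∀ x y : D, β x y = (x : R) * y := fun _ _ => rfl
    have h := neumann_biadditive β (K ε) ?_ ?_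
    · refine le_trans (Set.ncard_le_ncard ?_ (Set.toFinite _)) (h.trans (Nat.le_add_left _ _))
      rintro _ ⟨x, hx, y, hy, rfl⟩
      exact ⟨⟨x, hx⟩, ⟨y, hy⟩, rfl⟩
    · intro x
      refine le_trans (Set.ncard_le_ncard ?_ (Set.toFinite _)) (hAb x x.2.1)
      rintro _ ⟨y, rfl⟩
      exact ⟨y, rfl⟩
    · intro y
      refine le_trans (Set.ncard_le_ncard ?_ (Set.toFinite _)) (hBb y y.2.2)
      rintro _ ⟨x, rfl⟩
      exact ⟨x, rfl⟩
end

section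
/- Let L be a Lie ring (not necessarily finite) such that for every x ∈ L the centralizer C_L(x) = {y ∈ L : [x,y] = 0} has index at most n in the additive group of L. Then the additive subgroup [L,L] generated by all brackets [x,y] is finite of order at most g(n), where g is a universal function depending only on n. -/
/-!
Write `R x = ⁅x, L⁆` for the image of `y ↦ ⁅x, y⁆`; its order is the index of the centralizer of
`x`, hence at most `n`. Choose `a` with `R a` of maximal order and a preimage `b z` of every
`z ∈ R a`. The intersection `C` of the centralizers of the `b z` has index at most `n ^ n`. For
`c ∈ C`, `⁅a + c, b z⁆ = ⁅a, b z⁆ = z`, so `R a ≤ R (a + c)`, with equality by maximality; hence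
`R c ≤ R a` (`exists_finiteIndex_lie_mem`). Splitting `x ∈ L` as an element of `C` plus a coset
representative `s` shows that `[L, L]` lies in the sum of `R a` and the at most `n ^ n` subgroups
`R s`, all of order at most `n`. This gives the bound `n * n ^ (n ^ n)`.
-/

/-- The centralizer of an element `x` of a Lie ring, as an additive subgroup:
`C_L(x) = {y ∈ L : ⁅x, y⁆ = 0}`. -/
def lieCentralizer (L : Type) [LieRing L] (x : L) : AddSubgroup L where
  carrier := {y : L | ⁅x, y⁆ = 0}
  zero_mem' := lie_zero x
  add_mem' := by
    intro a b ha hb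
    simp only [Set.mem_setOf_eq] at *
    rw [lie_add, ha, hb, add_zero]
  neg_mem' := by
    intro a ha
    simp only [Set.mem_setOf_eq] at *
    rw [lie_neg, ha, neg_zero]

/-- The additive subgroup `⁅x, L⁆ = {⁅x, y⁆ : y ∈ L}` of a Lie ring, as the range of `y ↦ ⁅x, y⁆`. -/
def lieImage (L : Type) [LieRing L] (x : L) : AddSubgroup L :=
  (AddMonoidHom.mk' (fun y : L => ⁅x, y⁆) (lie_add x)).range

theorem mem_lieImage {L : Type} [LieRing L] {x z : L} :
    z ∈ lieImage L x ↔ ∃ y, ⁅x, y⁆ = z := Iff.rfl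

theorem card_lieImage {L : Type} [LieRing L] (x : L) :
    Nat.card (lieImage L x) = (lieCentralizer L x).index := by
  rw [lieImage, ← AddSubgroup.index_ker]
  rfl

theorem finite_lieImage {L : Type} [LieRing L] {x : L}
    (h : (lieCentralizer L x).index ≠ 0) : Finite (lieImage L x) :=
  Nat.finite_of_card_ne_zero (by rwa [card_lieImage])

/-- If all centralizers have index at most `n`, some subgroup `C` of index at most `n ^ n`
satisfies `⁅C, L⁆ ⊆ ⁅a, L⁆` for a single element `a`. -/
theorem exists_finiteIndex_lie_mem {L : Type} [LieRing L] {n : ℕ}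
    (h : ∀ x : L, (lieCentralizer L x).index ≠ 0 ∧ (lieCentralizer L x).index ≤ n) :
    ∃ (a : L) (C : AddSubgroup L), C.index ≠ 0 ∧ C.index ≤ n ^ n ∧
      ∀ c ∈ C, ∀ y : L, ⁅c, y⁆ ∈ lieImage L a := by
  have hn : 0 < n := (Nat.pos_of_ne_zero (h 0).1).trans_le (h 0).2
  have hfin (x : L) : Finite (lieImage L x) := finite_lieImage (h x).1
  obtain ⟨a, ha⟩ : ∃ a : L, ∀ x : L, Nat.card (lieImage L x) ≤ Nat.card (lieImage L a) := by
    have hbdd : (Set.range fun x : L => Nat.card (lieImage L x)).Finite :=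
      (Set.finite_Iic n).subset (by
        rintro _ ⟨x, rfl⟩
        exact (card_lieImage x).trans_le (h x).2)
    obtain ⟨_, ⟨⟨a, rfl⟩, hmax⟩⟩ := hbdd.exists_maximal (Set.range_nonempty _)
    refine ⟨a, fun x => ?_⟩
    rcases le_total (Nat.card (lieImage L x)) (Nat.card (lieImage L a)) with hx | hx
    · exact hx
    · exact hmax ⟨x, rfl⟩ hx
  have hb (z : lieImage L a) : ∃ y, ⁅a, y⁆ = (z : L) := mem_lieImage.1 z.2
  choose b hb using hb
  have := Fintype.ofFinite (lieImage L a)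
  refine ⟨a, ⨅ z, lieCentralizer L (b z), AddSubgroup.index_iInf_ne_zero fun z => (h _).1,
    ?_, fun c hc y => ?_⟩
  · calc (⨅ z, lieCentralizer L (b z)).index
        ≤ ∏ z, (lieCentralizer L (b z)).index := AddSubgroup.index_iInf_le _
      _ ≤ ∏ _z : lieImage L a, n := Finset.prod_le_prod' fun z _ => (h _).2
      _ = n ^ Nat.card (lieImage L a) := by simp [Nat.card_eq_fintype_card]
      _ ≤ n ^ n := Nat.pow_le_pow_right hn ((card_lieImage a).trans_le (h a).2)
  · have hle : lieImage L a ≤ lieImage L (a + c) := by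
      intro z hz
      have hcz : ⁅b ⟨z, hz⟩, c⁆ = 0 := AddSubgroup.mem_iInf.1 hc ⟨z, hz⟩
      refine mem_lieImage.2 ⟨b ⟨z, hz⟩, ?_⟩
      rw [add_lie, hb, ← lie_skew, hcz, neg_zero, add_zero]
    have heq : lieImage L a = lieImage L (a + c) := AddSubgroup.eq_of_le_of_card_ge hle (ha _)
    have h1 : ⁅a + c, y⁆ ∈ lieImage L a := heq ▸ mem_lieImage.2 ⟨y, rfl⟩
    have h2 : ⁅a, y⁆ ∈ lieImage L a := mem_lieImage.2 ⟨y, rfl⟩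
    simpa [add_lie] using sub_mem h1 h2

/-- **B. H. Neumann's theorem for Lie rings.**  There is a universal function
`g : ℕ → ℕ` such that if `L` is a Lie ring in which every centralizer `C_L(x)`
has (finite) index at most `n` in `(L, +)`, then the additive subgroup `[L, L]`
generated by all brackets is finite of order at most `g n`. -/
theorem lie_bounded_centralizer_index :
    ∃ g : ℕ → ℕ, ∀ (L : Type) [LieRing L] (n : ℕ),
      (∀ x : L, (lieCentralizer L x).index ≠ 0 ∧ (lieCentralizer L x).index ≤ n) →
      Finite (AddSubgroup.closure {z : L | ∃ x y : L, z = ⁅x, y⁆}) ∧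
      Nat.card (AddSubgroup.closure {z : L | ∃ x y : L, z = ⁅x, y⁆}) ≤ g n := by
  refine ⟨fun n => n * n ^ (n ^ n), fun L _ n h => ?_⟩
  have hn : 0 < n := (Nat.pos_of_ne_zero (h 0).1).trans_le (h 0).2
  have hfin (x : L) : Finite (lieImage L x) := finite_lieImage (h x).1
  have hcard (x : L) : Nat.card (lieImage L x) ≤ n := (card_lieImage x).trans_le (h x).2
  obtain ⟨a, C, hC0, hCn, hC⟩ := exists_finiteIndex_lie_mem h
  have : Finite (L ⧸ C) := Nat.finite_of_card_ne_zero hC0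
  have := Fintype.ofFinite (L ⧸ C)
  classical
  -- The sum of `⁅a, L⁆` and all `⁅s, L⁆`, with `s` running over coset representatives of `C`,
  -- is the range of the addition map `φ`.
  let φ : lieImage L a × (∀ q : L ⧸ C, lieImage L q.out) →+ L :=
    AddMonoidHom.mk' (fun p => (p.1 : L) + ∑ q, (p.2 q : L)) (by
      intro p p'
      simp only [Prod.fst_add, Prod.snd_add, Pi.add_apply, AddSubgroup.coe_add,
        Finset.sum_add_distrib]
      abel)
  have hle : AddSubgroup.closure {z : L | ∃ x y : L, z = ⁅x, y⁆} ≤ φ.range := by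
    rw [AddSubgroup.closure_le]
    rintro _ ⟨x, y, rfl⟩
    let q : L ⧸ C := (x : L ⧸ C)
    have hc : -q.out + x ∈ C := QuotientAddGroup.eq.1 (QuotientAddGroup.out_eq' q)
    refine ⟨(⟨_, hC _ hc y⟩, Pi.single q ⟨⁅q.out, y⁆, mem_lieImage.2 ⟨y, rfl⟩⟩), ?_⟩
    change ⁅-q.out + x, y⁆ + ∑ r, ((Pi.single q _ : ∀ r : L ⧸ C, lieImage L r.out) r : L) = _
    rw [Finset.sum_eq_single q (fun r _ hr => by rw [Pi.single_eq_of_ne hr]; rfl) (by simp),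
      Pi.single_eq_same, add_lie, neg_lie]
    abel
  have hφ : Finite φ.range := Finite.of_surjective _ φ.rangeRestrict_surjective
  refine ⟨Finite.of_injective _ (AddSubgroup.inclusion_injective hle), ?_⟩
  calc Nat.card (AddSubgroup.closure {z : L | ∃ x y : L, z = ⁅x, y⁆})
      ≤ Nat.card φ.range :=
        Nat.card_le_card_of_injective _ (AddSubgroup.inclusion_injective hle)
    _ ≤ Nat.card (lieImage L a × (∀ q : L ⧸ C, lieImage L q.out)) :=
        Nat.card_le_card_of_surjective _ φ.rangeRestrict_surjective
    _ = Nat.card (lieImage L a) * ∏ q : L ⧸ C, Nat.card (lieImage L q.out) := by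
        rw [Nat.card_prod, Nat.card_pi]
    _ ≤ n * ∏ _q : L ⧸ C, n :=
        Nat.mul_le_mul (hcard a) (Finset.prod_le_prod' fun q _ => hcard _)
    _ = n * n ^ C.index := by
        simp [AddSubgroup.index, Nat.card_eq_fintype_card]
    _ ≤ n * n ^ (n ^ n) := Nat.mul_le_mul_left _ (Nat.pow_le_pow_right hn hCn)
end

section
/- Let G be a finite group and X a symmetric subset of G containing the identity (i.e., 1 ∈ X and X = X⁻¹). If r is a natural number with (r + 1)·|X| > |G|, then the subgroup generated by X equals the set X^{3r} of products of 3r elements of X. -/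
/-!
If some power `X ^ (n + 1)` is contained in `X ^ n`, then `X ^ n` is stable under right
multiplication by `X = X⁻¹`, hence contains the subgroup generated by `X`. So if `X ^ (3 * r)` is
not the whole subgroup, the powers `X ^ 0 ⊂ X ^ 1 ⊂ ⋯ ⊂ X ^ (3 * r)` increase strictly, and for
each `i ≤ r` there is an element `g i` of word length exactly `3 * i` with respect to `X`.
The translates `g i * X`, for `i = 0, …, r`, are pairwise disjoint: if `g i * x = g j * y` with
`i < j`, then `g j = g i * x * y⁻¹` has length at most `3 * i + 2 < 3 * j`. Hence
`(r + 1) * |X| ≤ |G|`.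
-/

open scoped Pointwise

/-- A power of a symmetric set that is stable under right multiplication by the set contains the
generated subgroup. -/
lemma closure_subset_pow_of_stable {G : Type} [Group G] {X : Set G} (hone : (1 : G) ∈ X)
    (hsymm : X⁻¹ = X) {n : ℕ} (hn : X ^ (n + 1) ⊆ X ^ n) :
    (Subgroup.closure X : Set G) ⊆ X ^ n := by
  intro g hg
  have step : ∀ a ∈ X ^ n, ∀ b ∈ X, a * b ∈ X ^ n := fun a ha b hb =>
    hn (by rw [pow_succ]; exact Set.mul_mem_mul ha hb)
  induction hg using Subgroup.closure_induction_right with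
  | one => exact Set.one_mem_pow hone
  | mul_right a _ b hb ih => exact step a ih b hb
  | mul_inv_cancel a _ b hb ih => exact step a ih _ (by rw [← hsymm]; simpa using hb)

lemma pow_subset_closure {G : Type} [Group G] (X : Set G) (n : ℕ) :
    X ^ n ⊆ (Subgroup.closure X : Set G) := by
  induction n with
  | zero => simp
  | succ n ih =>
    rw [pow_succ]
    rintro _ ⟨a, ha, b, hb, rfl⟩
    exact mul_mem (ih ha) (Subgroup.subset_closure hb)

/-- **Eberhard's lemma.**  Let `G` be a finite group and `X` a symmetric subset
of `G` containing the identity.  If `(r + 1) * |X| > |G|`, then the subgroup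
generated by `X` equals the set `X ^ (3 * r)` of products of `3 * r` elements
of `X`. -/
theorem closure_eq_pow_of_symmetric (G : Type) [Group G] [Finite G]
    (X : Set G) (hone : (1 : G) ∈ X) (hsymm : X⁻¹ = X)
    (r : ℕ) (h : (r + 1) * Nat.card X > Nat.card G) :
    (Subgroup.closure X : Set G) = X ^ (3 * r) := by
  by_contra hne
  have mono : ∀ {m n : ℕ}, m ≤ n → X ^ m ⊆ X ^ n := fun hmn =>
    Set.pow_subset_pow_right hone hmn
  have exists_length : ∀ n ≤ 3 * r, ∃ g ∈ X ^ n, ∀ m < n, g ∉ X ^ m := by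
    intro n hn
    rcases n with _ | n
    · exact ⟨1, by simp, by simp⟩
    · have hns : ¬ X ^ (n + 1) ⊆ X ^ n := fun hsub =>
        hne (((closure_subset_pow_of_stable hone hsymm hsub).trans (mono (by omega))).antisymm
          (pow_subset_closure X _))
      obtain ⟨g, hg, hg'⟩ := Set.not_subset.1 hns
      exact ⟨g, hg, fun m hm hgm => hg' (mono (by omega) hgm)⟩
  choose g hg hg' using fun i : Fin (r + 1) => exists_length (3 * i) (by omega)
  have no_collision : ∀ i j : Fin (r + 1), i < j → ∀ x ∈ X, ∀ y ∈ X, g i * x ≠ g j * y := by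
    intro i j hij x hx y hy hxy
    refine hg' j (3 * i + 2) (by omega) ?_
    have hy' : y⁻¹ ∈ X := by rw [← hsymm]; simpa using hy
    rw [eq_mul_inv_of_mul_eq hxy.symm, pow_succ, pow_succ]
    exact Set.mul_mem_mul (Set.mul_mem_mul (hg i) hx) hy'
  have inj : Function.Injective (fun p : Fin (r + 1) × X => g p.1 * (p.2 : G)) := by
    rintro ⟨i, x, hx⟩ ⟨j, y, hy⟩ hxy
    rcases lt_trichotomy i j with hij | rfl | hij
    · exact (no_collision i j hij x hx y hy hxy).elim
    · simpa using hxy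
    · exact (no_collision j i hij y hy x hx hxy.symm).elim
  have := Nat.card_le_card_of_injective _ inj
  rw [Nat.card_prod, Nat.card_fin] at this
  omega
end

section
/- Let R be a finite associative ring and B a one-sided ideal (say, a right ideal: an additive subgroup with BR ⊆ B) such that the index of B in (R,+) is at most n and the cardinality of the set B² = {b₁b₂ : b₁, b₂ ∈ B} is at most n. Then there exists a two-sided ideal A of R such that the index of A in (R,+) is at most g(n) and |A²| ≤ g(n), where g is a universal function depending only on n. -/
/-!
The ideal `A` is the largest two-sided ideal contained in `B`, namely `{a ∈ B | R * a ⊆ B}`.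
Since `A ⊆ B`, also `A² ⊆ B²`. The group `R ⧸ B` is a right `R`-module with at most `n`
elements, and `A` is the intersection of `B` with the annihilator of this module, that is, with the
kernel of the map from `R` to the self-maps of `R ⧸ B`. Hence `A` has index at most `n * n ^ n`.
-/


/-- There is a universal function `g : ℕ → ℕ` such that if `R` is a finite ring
and `B` is a right ideal of `R` (an additive subgroup with `B * R ⊆ B`) whose
additive index is at most `n` and such that `B² = {b₁ * b₂ : b₁, b₂ ∈ B}` has
cardinality at most `n`, then there is a two-sided ideal `A` of `R` whose
additive index is at most `g n` and with `|A²| ≤ g n`. -/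
theorem one_sided_to_two_sided :
    ∃ g : ℕ → ℕ, ∀ (R : Type) [NonUnitalRing R] [Fintype R] (n : ℕ)
      (B : AddSubgroup R),
      (∀ b ∈ B, ∀ x : R, b * x ∈ B) →
      B.index ≤ n →
      Nat.card {z : R | ∃ b₁ ∈ B, ∃ b₂ ∈ B, z = b₁ * b₂} ≤ n →
      ∃ A : AddSubgroup R,
        (∀ a ∈ A, ∀ x : R, x * a ∈ A ∧ a * x ∈ A) ∧
        A.index ≤ g n ∧
        Nat.card {z : R | ∃ a₁ ∈ A, ∃ a₂ ∈ A, z = a₁ * a₂} ≤ g n := by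
  refine ⟨fun n => n * n ^ n, fun R _ _ n B hB hn hsq => ?_⟩
  -- Choosing representatives `q.out` makes `φ` additive with no well-definedness to check; that
  -- its kernel is independent of the representatives is the content of `hmem`.
  let φ : R →+ (R ⧸ B) × (R ⧸ B → R ⧸ B) :=
    { toFun := fun r => ((r : R ⧸ B), fun q => ((q.out * r : R) : R ⧸ B))
      map_zero' := by
        ext <;> simp
      map_add' := fun r s => by
        ext <;> simp [mul_add] }
  have hmem : ∀ r, r ∈ φ.ker ↔ r ∈ B ∧ ∀ x, x * r ∈ B := by
    intro r
    have h0 : r ∈ φ.ker ↔ r ∈ B ∧ ∀ q : R ⧸ B, q.out * r ∈ B := by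
      simp [φ, AddMonoidHom.mem_ker, Prod.ext_iff, funext_iff]
    rw [h0]
    refine and_congr_right fun _ => ⟨fun h x => ?_, fun h q => h _⟩
    have hx : -(x : R ⧸ B).out + x ∈ B := QuotientAddGroup.eq.1 (QuotientAddGroup.out_eq' _)
    have := B.add_mem (h (x : R ⧸ B)) (hB _ hx r)
    rwa [← add_mul, add_neg_cancel_left] at this
  refine ⟨φ.ker, fun a ha x => ?_, ?_, ?_⟩
  · rw [hmem] at ha
    obtain ⟨haB, ha⟩ := ha
    refine ⟨(hmem _).2 ⟨ha x, fun y => ?_⟩, (hmem _).2 ⟨hB a haB x, fun y => ?_⟩⟩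
    · rw [← mul_assoc]
      exact ha _
    · rw [← mul_assoc]
      exact hB _ (ha y) x
  · have hpos : 0 < n := (Nat.pos_of_ne_zero B.index_ne_zero_of_finite).trans_le hn
    calc φ.ker.index = Nat.card φ.range := AddSubgroup.index_ker φ
      _ ≤ Nat.card ((R ⧸ B) × (R ⧸ B → R ⧸ B)) := Nat.card_le_card_of_injective _ Subtype.val_injective
      _ = B.index * B.index ^ B.index := by
        rw [Nat.card_prod, Nat.card_fun]
        rfl
      _ ≤ n * n ^ n := Nat.mul_le_mul hn
        ((Nat.pow_le_pow_left hn _).trans (Nat.pow_le_pow_right hpos hn))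
  · -- The factor `n ^ n` is positive, also for `n = 0`, where `0 ^ 0 = 1`.
    have hle : n ≤ n * n ^ n := Nat.le_mul_of_pos_right n (Nat.pow_self_pos)
    refine (Nat.card_mono (Set.toFinite _) ?_).trans (hsq.trans hle)
    rintro z ⟨a, ha, b, hb, rfl⟩
    exact ⟨a, ((hmem a).1 ha).1, b, ((hmem b).1 hb).1, rfl⟩
end

section
/- Let L be a Lie ring and a ∈ L an element such that the set [L,a] = {[y,a] : y ∈ L} is finite with exactly n elements, and such that |[L,y]| ≤ n for every y ∈ L (i.e., a realizes the maximal size). Write [L,a] = {[b₁,a], …, [bₙ,a]} for elements b₁, …, bₙ ∈ L. Then for every x ∈ L with [bᵢ, x] = 0 for all i = 1, …, n, one has [L, x] ⊆ [L, a]; in particular [L, a + x] = [L, a]. -/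
/-!
Since `⁅b i, x⁆ = 0`, the `n` elements `⁅b i, a⁆` of `[L, a]` equal `⁅b i, a + x⁆`, so
`[L, a] ⊆ [L, a + x]`; as `[L, a + x]` has at most `n` elements, the two sets coincide. Then
`⁅y, x⁆ = ⁅y, a + x⁆ - ⁅y, a⁆` is a difference of elements of the additive group `[L, a]`.
-/

/-- Key step in the Lie-ring analogue of B. H. Neumann's theorem.  Let `L` be a
Lie ring and `a ∈ L` such that `[L, a] = {⁅y, a⁆ : y ∈ L}` is finite with
exactly `n` elements and `|[L, y]| ≤ n` for every `y ∈ L` (so `a` realizes the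
maximal size).  Write `[L, a] = {⁅b₁, a⁆, …, ⁅bₙ, a⁆}`.  Then for every `x ∈ L`
with `⁅bᵢ, x⁆ = 0` for all `i`, one has `[L, x] ⊆ [L, a]`; in particular
`[L, a + x] = [L, a]`. -/
theorem lie_maximal_image_step (L : Type) [LieRing L] (a : L) (n : ℕ)
    (b : Fin n → L)
    (hfin : ({z : L | ∃ y : L, z = ⁅y, a⁆}).Finite)
    (hcard : Nat.card {z : L | ∃ y : L, z = ⁅y, a⁆} = n)
    (hb : {z : L | ∃ y : L, z = ⁅y, a⁆} = Set.range fun i => ⁅b i, a⁆)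
    (hmax : ∀ y : L, ({z : L | ∃ w : L, z = ⁅w, y⁆}).Finite ∧
      Nat.card {z : L | ∃ w : L, z = ⁅w, y⁆} ≤ n)
    (x : L) (hx : ∀ i, ⁅b i, x⁆ = 0) :
    {z : L | ∃ y : L, z = ⁅y, x⁆} ⊆ {z : L | ∃ y : L, z = ⁅y, a⁆} ∧
    {z : L | ∃ y : L, z = ⁅y, a + x⁆} = {z : L | ∃ y : L, z = ⁅y, a⁆} := by
  -- One inclusion: `⁅b i, a + x⁆ = ⁅b i, a⁆` because `⁅b i, x⁆ = 0`.
  have hsub : {z : L | ∃ y : L, z = ⁅y, a⁆} ⊆ {z : L | ∃ y : L, z = ⁅y, a + x⁆} := by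
    rw [hb]
    rintro _ ⟨i, rfl⟩
    exact ⟨b i, by simp [hx i]⟩
  -- Maximality of `n` turns the inclusion of finite sets into an equality.
  have heq : {z : L | ∃ y : L, z = ⁅y, a⁆} = {z : L | ∃ y : L, z = ⁅y, a + x⁆} := by
    refine Set.eq_of_subset_of_ncard_le hsub ?_ (hmax (a + x)).1
    rw [← Nat.card_coe_set_eq, ← Nat.card_coe_set_eq, hcard]
    exact (hmax (a + x)).2
  refine ⟨?_, heq.symm⟩
  rintro _ ⟨y, rfl⟩
  -- `⁅y, x⁆ = ⁅y, a + x⁆ - ⁅y, a⁆`, and `[L, a]` is closed under subtraction.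
  obtain ⟨w, hw⟩ : ⁅y, a + x⁆ ∈ {z : L | ∃ y : L, z = ⁅y, a⁆} := heq ▸ ⟨y, rfl⟩
  exact ⟨w - y, by rw [sub_lie, ← hw, lie_add, add_sub_cancel_left]⟩
end

section
/- Let R be an associative ring and a ∈ R an element such that the set aR = {ar : r ∈ R} is finite with exactly n elements, and such that |yR| ≤ n for every y ∈ R (i.e., a realizes the maximal size). Write aR = {ab₁, …, abₙ} for elements b₁, …, bₙ ∈ R. Then for every x ∈ R with x·bᵢ = 0 for all i = 1, …, n, one has xR ⊆ aR; in particular (a + x)R = aR. -/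
/-- Key step in the ring analogue of B. H. Neumann's theorem.  Let `R` be an
associative ring and `a ∈ R` such that `aR = {a * r : r ∈ R}` is finite with
exactly `n` elements and `|yR| ≤ n` for every `y ∈ R` (so `a` realizes the
maximal size).  Write `aR = {a * b₁, …, a * bₙ}`.  Then for every `x ∈ R` with
`x * bᵢ = 0` for all `i`, one has `xR ⊆ aR`; in particular `(a + x)R = aR`. -/
theorem ring_maximal_image_step (R : Type) [NonUnitalRing R] (a : R) (n : ℕ)
    (b : Fin n → R)
    (hfin : ({z : R | ∃ r : R, z = a * r}).Finite)
    (hcard : Nat.card {z : R | ∃ r : R, z = a * r} = n)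
    (hb : {z : R | ∃ r : R, z = a * r} = Set.range fun i => a * b i)
    (hmax : ∀ y : R, ({z : R | ∃ r : R, z = y * r}).Finite ∧
      Nat.card {z : R | ∃ r : R, z = y * r} ≤ n)
    (x : R) (hx : ∀ i, x * b i = 0) :
    {z : R | ∃ r : R, z = x * r} ⊆ {z : R | ∃ r : R, z = a * r} ∧
    {z : R | ∃ r : R, z = (a + x) * r} = {z : R | ∃ r : R, z = a * r} := by
  -- `(a + x) * b i = a * b i`, so `aR ⊆ (a + x)R`, and maximality of `|aR|` forces equality.
  have hsub : {z : R | ∃ r : R, z = a * r} ⊆ {z : R | ∃ r : R, z = (a + x) * r} := by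
    intro z hz
    rw [hb] at hz
    obtain ⟨i, rfl⟩ := hz
    exact ⟨b i, by simp [add_mul, hx i]⟩
  have heq : {z : R | ∃ r : R, z = a * r} = {z : R | ∃ r : R, z = (a + x) * r} := by
    obtain ⟨hf, hle⟩ := hmax (a + x)
    refine Set.eq_of_subset_of_ncard_le hsub ?_ hf
    rw [← Nat.card_coe_set_eq, ← Nat.card_coe_set_eq, hcard]
    exact hle
  refine ⟨?_, heq.symm⟩
  -- `x * r` is the difference of `(a + x) * r = a * s` and `a * r`.
  rintro _ ⟨r, rfl⟩
  obtain ⟨s, hs⟩ : (a + x) * r ∈ {z : R | ∃ r : R, z = a * r} := heq ▸ ⟨r, rfl⟩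
  exact ⟨s - r, by rw [mul_sub, ← hs, add_mul, add_sub_cancel_left]⟩
end

section
/- Let L be a finite Lie ring with cp(L) = ε > 0, and set X = {x ∈ L : |[L,x]| ≤ 2/ε}. Then |X| > (ε/2)·|L|. Consequently, the additive subgroup B generated by X has index less than 2/ε in (L,+). -/
/-!
Counting commuting pairs one coordinate at a time gives `ε * |L| ^ 2 = ∑ x, |C(x)|`, where `C(x)` is
the centralizer of `x`. It is the kernel of the additive map `y ↦ ⁅y, x⁆`, whose image is `[L, x]`,
so `|C(x)| * |[L, x]| = |L|`. Hence `|C(x)| ≤ (ε / 2) * |L|` for `x ∉ X`, while trivially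
`|C(x)| ≤ |L|` for `x ∈ X`. Summing over `x` yields
`ε * |L| ^ 2 ≤ |X| * |L| + (|L| - |X|) * (ε / 2) * |L|`, which forces `|X| > (ε / 2) * |L|`.
The index bound follows by Lagrange's theorem, since the subgroup generated by `X` contains `X`.
-/

theorem card_centralizer_mul_card_image {L : Type} [LieRing L] [Fintype L] (x : L) :
    Nat.card {y : L // ⁅x, y⁆ = 0} * Nat.card {z : L | ∃ y : L, z = ⁅y, x⁆} = Nat.card L := by
  let f : L →+ L := AddMonoidHom.mk' (fun y => ⁅y, x⁆) (fun a b => add_lie a b x)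
  have hker : Nat.card {y : L // ⁅x, y⁆ = 0} = Nat.card f.ker := by
    refine Nat.card_congr (Equiv.subtypeEquivRight fun y => ?_)
    change _ ↔ ⁅y, x⁆ = 0
    rw [← lie_skew, neg_eq_zero]
  have hrange : Nat.card {z : L | ∃ y : L, z = ⁅y, x⁆} = Nat.card f.range := by
    refine Nat.card_congr (Equiv.subtypeEquivRight fun z => ?_)
    change (∃ y, z = ⁅y, x⁆) ↔ ∃ y, ⁅y, x⁆ = z
    simp only [eq_comm]
  rw [hker, hrange, ← AddSubgroup.index_ker, AddSubgroup.card_mul_index]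

theorem card_commuting_pairs (L : Type) [LieRing L] [Fintype L] :
    Nat.card {p : L × L // ⁅p.1, p.2⁆ = 0} = ∑ x : L, Nat.card {y : L // ⁅x, y⁆ = 0} := by
  rw [← Nat.card_sigma]
  exact Nat.card_congr (Equiv.subtypeProdEquivSigmaSubtype fun x y : L => ⁅x, y⁆ = 0)


/-- Let `L` be a finite Lie ring with `cp(L) = ε > 0` and let
`X = {x ∈ L : |[L, x]| ≤ 2/ε}`.  Then `|X| > (ε/2) * |L|`; consequently the
additive subgroup generated by `X` has index less than `2/ε` in `(L, +)`. -/
theorem lie_large_small_image_set (L : Type) [LieRing L] [Fintype L]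
    (ε : ℝ) (hε : 0 < ε) (hcp : lieCommProb L = ε)
    (X : Set L)
    (hX : X = {x : L | (Nat.card {z : L | ∃ y : L, z = ⁅y, x⁆} : ℝ) ≤ 2 / ε}) :
    (ε / 2) * (Nat.card L : ℝ) < (Nat.card X : ℝ) ∧
    ((AddSubgroup.closure X).index : ℝ) < 2 / ε := by
  classical
  have hn : (0 : ℝ) < Nat.card L := by exact_mod_cast Nat.card_pos
  have hpairs : ε * (Nat.card L : ℝ) ^ 2 = ∑ x : L, (Nat.card {y : L // ⁅x, y⁆ = 0} : ℝ) := by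
    have h := hcp
    rw [lieCommProb, div_eq_iff (by positivity)] at h
    rw [← h, card_commuting_pairs]
    push_cast
    rfl
  have hbound : ∀ x : L, (Nat.card {y : L // ⁅x, y⁆ = 0} : ℝ) ≤
      ε / 2 * Nat.card L + if x ∈ X then (1 - ε / 2) * (Nat.card L : ℝ) else 0 := by
    intro x
    have hmul : (Nat.card {y : L // ⁅x, y⁆ = 0} : ℝ) *
        Nat.card {z : L | ∃ y : L, z = ⁅y, x⁆} = Nat.card L := by
      exact_mod_cast card_centralizer_mul_card_image x
    split_ifs with hx
    · have : (Nat.card {y : L // ⁅x, y⁆ = 0} : ℝ) ≤ Nat.card L := by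
        exact_mod_cast Finite.card_subtype_le _
      linarith
    · rw [hX, Set.mem_ofPred_eq, not_le] at hx
      have h := mul_le_mul_of_nonneg_left hx.le
        (Nat.cast_nonneg (α := ℝ) (Nat.card {y : L // ⁅x, y⁆ = 0}))
      rw [hmul, mul_div_assoc', div_le_iff₀ hε] at h
      linarith
  have hsum := Finset.sum_le_sum fun x (_ : x ∈ Finset.univ) => hbound x
  have hcard : ((Finset.univ.filter fun x => x ∈ X).card : ℝ) = Nat.card X := by
    rw [Nat.card_eq_fintype_card, Fintype.card_subtype]
  rw [← hpairs, Finset.sum_add_distrib, ← Finset.sum_filter, Finset.sum_const, Finset.sum_const,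
    nsmul_eq_mul, nsmul_eq_mul, hcard, Finset.card_univ, ← Nat.card_eq_fintype_card] at hsum
  have hlarge : ε / 2 * (Nat.card L : ℝ) < Nat.card X := by
    have h : ε / 2 * (Nat.card L : ℝ) ≤ Nat.card X * (1 - ε / 2) :=
      le_of_mul_le_mul_right (by linarith) hn
    -- The bound `h` first shows that `X` is nonempty, which then makes the inequality strict.
    have hk : (0 : ℝ) ≤ Nat.card X := Nat.cast_nonneg _
    have hεn : 0 < ε / 2 * (Nat.card L : ℝ) := by positivity
    have hkε : 0 ≤ (Nat.card X : ℝ) * (ε / 2) := by positivity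
    have hkpos : (0 : ℝ) < Nat.card X := by linarith
    have : 0 < (Nat.card X : ℝ) * (ε / 2) := by positivity
    linarith
  refine ⟨hlarge, ?_⟩
  have hle : (Nat.card X : ℝ) ≤ Nat.card (AddSubgroup.closure X) := by
    exact_mod_cast Nat.card_mono (Set.toFinite _) AddSubgroup.subset_closure
  have hindex : (Nat.card (AddSubgroup.closure X) : ℝ) * (AddSubgroup.closure X).index =
      Nat.card L := by
    exact_mod_cast (AddSubgroup.closure X).card_mul_index
  have hipos : (0 : ℝ) < (AddSubgroup.closure X).index := by
    exact_mod_cast Nat.pos_of_ne_zero AddSubgroup.index_ne_zero_of_finite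
  have h := mul_lt_mul_of_pos_right (hlarge.trans_le hle) hipos
  rw [hindex] at h
  rw [lt_div_iff₀ hε]
  have h' : (AddSubgroup.closure X).index * ε * (Nat.card L : ℝ) < 2 * Nat.card L := by linarith
  exact lt_of_mul_lt_mul_right h' hn.le
end

section
/- Let R be a finite associative ring with zp(R) = ε > 0, and set X = {x ∈ R : |xR| ≤ 2/ε}. Then |X| > (ε/2)·|R|. Consequently, the additive subgroup B generated by X has index less than 2/ε in (R,+). -/
/-- Lagrange's theorem for the additive homomorphism `y ↦ x * y`. -/
lemma card_image_mul_card_ann (R : Type) [NonUnitalRing R] [Fintype R] (x : R) :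
    Nat.card {z : R | ∃ r : R, z = x * r} * Nat.card {y : R // x * y = 0} = Nat.card R := by
  have h := (AddMonoidHom.mulLeft x).ker.card_mul_index
  rw [AddSubgroup.index_ker, mul_comm] at h
  have h1 : Nat.card {z : R | ∃ r : R, z = x * r} = Nat.card (AddMonoidHom.mulLeft x).range :=
    Nat.card_congr (Equiv.subtypeEquivRight fun z => by
      simp [AddMonoidHom.mem_range, eq_comm])
  have h2 : Nat.card {y : R // x * y = 0} = Nat.card (AddMonoidHom.mulLeft x).ker :=
    Nat.card_congr (Equiv.subtypeEquivRight fun y => by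
      simp [AddMonoidHom.mem_ker])
  rw [h1, h2, h]

lemma card_zero_pairs (R : Type) [NonUnitalRing R] [Fintype R] :
    Nat.card {p : R × R // p.1 * p.2 = 0} = ∑ x : R, Nat.card {y : R // x * y = 0} := by
  rw [← Nat.card_sigma]
  exact Nat.card_congr (Equiv.subtypeProdEquivSigmaSubtype fun x y : R => x * y = 0)

/-- Let `R` be a finite ring with `zp(R) = ε > 0` and let
`X = {x ∈ R : |xR| ≤ 2/ε}`.  Then `|X| > (ε/2) * |R|`; consequently the
additive subgroup generated by `X` has index less than `2/ε` in `(R, +)`. -/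
theorem ring_large_small_image_set (R : Type) [NonUnitalRing R] [Fintype R]
    (ε : ℝ) (hε : 0 < ε) (hzp : ringZeroProb R = ε)
    (X : Set R)
    (hX : X = {x : R | (Nat.card {z : R | ∃ r : R, z = x * r} : ℝ) ≤ 2 / ε}) :
    (ε / 2) * (Nat.card R : ℝ) < (Nat.card X : ℝ) ∧
    ((AddSubgroup.closure X).index : ℝ) < 2 / ε := by
  classical
  have hn : (0 : ℝ) < Nat.card R := by exact_mod_cast Nat.card_pos
  have hsum : ∑ x : R, (Nat.card {y : R // x * y = 0} : ℝ) = ε * (Nat.card R : ℝ) ^ 2 := by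
    rw [← hzp, ringZeroProb, card_zero_pairs]
    push_cast
    field_simp
  have hrow : ∀ x : R, (Nat.card {y : R // x * y = 0} : ℝ) ≤
      (Nat.card R : ℝ) * (ε / 2) + if x ∈ X then (Nat.card R : ℝ) * (1 - ε / 2) else 0 := by
    intro x
    split_ifs with hx
    · have : (Nat.card {y : R // x * y = 0} : ℝ) ≤ Nat.card R := by
        exact_mod_cast Finite.card_subtype_le _
      linarith
    · rw [hX, Set.mem_ofPred_eq, not_le, div_lt_iff₀ hε] at hx
      have h : (Nat.card {z : R | ∃ r : R, z = x * r} : ℝ) * Nat.card {y : R // x * y = 0} =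
          Nat.card R := by
        exact_mod_cast card_image_mul_card_ann R x
      have h0 : (0 : ℝ) ≤ Nat.card {y : R // x * y = 0} := Nat.cast_nonneg _
      have := mul_le_mul_of_nonneg_right hx.le h0
      rw [← h]
      linarith
  have hle := Finset.sum_le_sum fun x (_ : x ∈ Finset.univ) => hrow x
  have hcard : (Finset.univ.filter (· ∈ X)).card = Nat.card X := by
    rw [Nat.card_eq_fintype_card, Fintype.card_subtype]
  rw [hsum, Finset.sum_add_distrib, ← Finset.sum_filter, Finset.sum_const, Finset.sum_const, hcard,
    Finset.card_univ, ← Nat.card_eq_fintype_card, nsmul_eq_mul, nsmul_eq_mul] at hle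
  have hmain : ε * (Nat.card R : ℝ) ≤
      (Nat.card R : ℝ) * (ε / 2) + (Nat.card X : ℝ) * (1 - ε / 2) := by
    refine le_of_mul_le_mul_left ?_ hn
    linarith
  have hlt : (ε / 2) * (Nat.card R : ℝ) < (Nat.card X : ℝ) := by
    have hnε := mul_pos hn hε
    rcases (Nat.cast_nonneg (α := ℝ) (Nat.card X)).eq_or_lt with h0 | hpos
    · rw [← h0] at hmain
      linarith
    · have := mul_pos hpos hε
      linarith
  refine ⟨hlt, ?_⟩
  have hB : (Nat.card X : ℝ) ≤ Nat.card (AddSubgroup.closure X) := by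
    exact_mod_cast Nat.card_mono (Set.toFinite _) AddSubgroup.subset_closure
  have hLag : (Nat.card (AddSubgroup.closure X) : ℝ) * (AddSubgroup.closure X).index =
      Nat.card R := by
    exact_mod_cast (AddSubgroup.closure X).card_mul_index
  have hi : (0 : ℝ) < (AddSubgroup.closure X).index := by
    exact_mod_cast Nat.pos_of_ne_zero AddSubgroup.index_ne_zero_of_finite
  rw [lt_div_iff₀ hε]
  have h := mul_lt_mul_of_pos_right (hlt.trans_le hB) hi
  rw [hLag] at h
  refine lt_of_mul_lt_mul_left ?_ hn.le
  linarith
end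

section
/- Let L be a finite Lie ring with cp(L) = ε > 0, let X = {x ∈ L : |[L,x]| ≤ 2/ε}, and let B be the additive subgroup of L generated by X. Then every element of B is a sum of at most 6/ε elements of X, and consequently |[L,b]| ≤ (2/ε)^{6/ε} for every b ∈ B. -/
open scoped Pointwise in
/-- A symmetric set `X` containing `0` in a finite abelian group generates in `3k + 2` steps,
where `k + 1` is at most the ratio of the size of the generated subgroup to that of `X`. Here
`n • X` is the pointwise multiple, i.e. the `n`-fold sumset. -/
theorem exists_closure_subset_nsmul {G : Type*} [AddCommGroup G] [Finite G] (X : Set G)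
    (h0 : (0 : G) ∈ X) (hneg : ∀ x ∈ X, -x ∈ X) :
    ∃ k : ℕ, (k + 1) * X.ncard ≤ Nat.card (AddSubgroup.closure X) ∧
      ∀ b ∈ AddSubgroup.closure X, b ∈ (3 * k + 2) • X := by
  have hsub : ∀ n : ℕ, n • X ⊆ (AddSubgroup.closure X : Set G) := by
    intro n
    induction n with
    | zero => simp
    | succ n ih =>
      rw [succ_nsmul]
      rintro _ ⟨a, ha, x, hx, rfl⟩
      exact add_mem (ih ha) (AddSubgroup.subset_closure hx)
  have hmono : ∀ n : ℕ, n • X ⊆ (n + 1) • X := by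
    intro n a ha
    rw [succ_nsmul]
    exact ⟨a, ha, 0, h0, add_zero a⟩
  have hpos : 0 < X.ncard := (Set.ncard_pos).2 ⟨0, h0⟩
  have hle : ∀ n : ℕ, (n • X).ncard ≤ Nat.card (AddSubgroup.closure X) := fun n =>
    Set.ncard_le_ncard (hsub n)
  -- While `(3j+2)X ≠ (3j+3)X`, three more summands gain a disjoint translate of `X`.
  have hgrow : ∀ k : ℕ, (∀ j < k, (3 * j + 2) • X ≠ (3 * j + 3) • X) →
      (k + 1) * X.ncard ≤ ((3 * k + 1) • X).ncard := by
    intro k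
    induction k with
    | zero => intro _; simp
    | succ k ih =>
      intro h
      have ih' := ih fun j hj => h j (by omega)
      obtain ⟨x, hx, hx'⟩ := Set.exists_of_ssubset
        ((hmono (3 * k + 2)).ssubset_of_ne (h k (by omega)))
      have hdisj : Disjoint ((3 * k + 1) • X) ((fun y => x + y) '' X) := by
        rw [Set.disjoint_left]
        rintro _ ha ⟨y, hy, rfl⟩
        apply hx'
        rw [succ_nsmul]
        exact ⟨x + y, ha, -y, hneg y hy, by simp⟩
      have hun : (3 * k + 1) • X ∪ (fun y => x + y) '' X ⊆ (3 * (k + 1) + 1) • X := by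
        apply Set.union_subset
        · exact (hmono _).trans ((hmono _).trans (hmono _))
        · rintro _ ⟨y, hy, rfl⟩
          rw [succ_nsmul]
          exact ⟨x, hx, y, hy, rfl⟩
      have h1 := Set.ncard_le_ncard hun
      rw [Set.ncard_union_eq hdisj, Set.ncard_image_of_injective _ (add_right_injective x)] at h1
      linarith
  have hex : ∃ j, (3 * j + 2) • X = (3 * j + 3) • X := by
    by_contra! hne
    have h1 := (hgrow (Nat.card (AddSubgroup.closure X)) fun j _ => hne j).trans (hle _)
    nlinarith
  classical
  refine ⟨Nat.find hex, (hgrow _ fun j hj => Nat.find_min hex hj).trans (hle _), ?_⟩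
  have hst := Nat.find_spec hex
  generalize Nat.find hex = k at hst
  have hadd : ∀ a ∈ (3 * k + 2) • X, ∀ y ∈ X, a + y ∈ (3 * k + 2) • X := by
    intro a ha y hy
    rw [hst, succ_nsmul]
    exact ⟨a, ha, y, hy, rfl⟩
  intro b hb
  induction hb using AddSubgroup.closure_induction_right with
  | zero =>
    have : ∀ n : ℕ, (0 : G) ∈ n • X := by
      intro n
      induction n with
      | zero => simp
      | succ n ih => exact hmono n ih
    exact this _
  | add_right a _ y hy ih => exact hadd a ih y hy
  | add_neg_cancel a _ y hy ih => exact hadd a ih (-y) (hneg y hy)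

/-- The map `y ↦ ⁅y, x⁆`, whose range is the set `[L, x]` and whose kernel is the centralizer of
`x`. -/
def bracketRight {L : Type*} [LieRing L] (x : L) : L →+ L where
  toFun y := ⁅y, x⁆
  map_zero' := zero_lie x
  map_add' y z := add_lie y z x

theorem card_bracket_eq {L : Type*} [LieRing L] (x : L) :
    Nat.card {z : L | ∃ y : L, z = ⁅y, x⁆} = Nat.card (bracketRight x).range := by
  have : {z : L | ∃ y : L, z = ⁅y, x⁆} = ((bracketRight x).range : Set L) := by
    ext z
    simp [bracketRight, eq_comm]
  rw [this]
  rfl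

/-- Count commuting pairs by their second coordinate and apply rank-nullity to each
`y ↦ ⁅y, x⁆`. -/
theorem lieCommProb_mul_card (L : Type) [LieRing L] [Fintype L] :
    lieCommProb L * Nat.card L =
      ∑ x : L, ((Nat.card (bracketRight x).range : ℝ))⁻¹ := by
  have hL : (Nat.card L : ℝ) ≠ 0 := by exact_mod_cast Nat.card_pos.ne'
  have hcount : Nat.card {p : L × L // ⁅p.1, p.2⁆ = 0} =
      ∑ x : L, Nat.card (bracketRight x).ker := by
    let e : {p : L × L // ⁅p.1, p.2⁆ = 0} ≃ (Σ x : L, (bracketRight x).ker) :=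
      { toFun p := ⟨p.1.2, p.1.1, p.2⟩
        invFun q := ⟨(q.2.1, q.1), q.2.2⟩
        left_inv _ := rfl
        right_inv _ := rfl }
    rw [Nat.card_congr e, Nat.card_sigma]
  have hker : ∀ x : L, (Nat.card (bracketRight x).ker : ℝ) =
      Nat.card L * (Nat.card (bracketRight x).range : ℝ)⁻¹ := by
    intro x
    have hr : (Nat.card (bracketRight x).range : ℝ) ≠ 0 := by exact_mod_cast Nat.card_pos.ne'
    rw [eq_mul_inv_iff_mul_eq₀ hr, ← AddSubgroup.index_ker]
    exact_mod_cast (bracketRight x).ker.card_mul_index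
  rw [lieCommProb, hcount]
  push_cast
  simp_rw [hker, ← Finset.mul_sum]
  field_simp

/-- A bracket with a sum is a sum of brackets, so `[L, a + b] ⊆ [L, a] + [L, b]`. -/
theorem card_range_bracketRight_add_le {L : Type*} [LieRing L] [Finite L] (a b : L) :
    Nat.card (bracketRight (a + b)).range ≤
      Nat.card (bracketRight a).range * Nat.card (bracketRight b).range := by
  rw [← Nat.card_prod]
  have hle : ∀ z : (bracketRight (a + b)).range,
      ∃ p : (bracketRight a).range × (bracketRight b).range, (p.1 : L) + p.2 = z := by
    rintro ⟨_, y, rfl⟩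
    exact ⟨(⟨_, y, rfl⟩, ⟨_, y, rfl⟩), (lie_add y a b).symm⟩
  choose f hf using hle
  refine Nat.card_le_card_of_injective f fun z w h => Subtype.ext ?_
  rw [← hf z, ← hf w, h]

open scoped Pointwise in
/-- Let `L` be a finite Lie ring with `cp(L) = ε > 0`, let
`X = {x ∈ L : |[L, x]| ≤ 2/ε}` and let `B` be the additive subgroup generated
by `X`.  Then every element of `B` is a sum of at most `6/ε` elements of `X`,
and consequently `|[L, b]| ≤ (2/ε) ^ (6/ε)` for every `b ∈ B`. -/
theorem lie_generation_bound (L : Type) [LieRing L] [Fintype L]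
    (ε : ℝ) (hε : 0 < ε) (hcp : lieCommProb L = ε)
    (X : Set L)
    (hX : X = {x : L | (Nat.card {z : L | ∃ y : L, z = ⁅y, x⁆} : ℝ) ≤ 2 / ε})
    (B : AddSubgroup L) (hB : B = AddSubgroup.closure X) :
    (∀ b ∈ B, ∃ (k : ℕ) (c : Fin k → L),
      (k : ℝ) ≤ 6 / ε ∧ (∀ i, c i ∈ X) ∧ b = ∑ i, c i) ∧
    ∀ b ∈ B,
      (Nat.card {z : L | ∃ y : L, z = ⁅y, b⁆} : ℝ) ≤ (2 / ε) ^ ((6 : ℝ) / ε) := by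
  classical
  simp_rw [card_bracket_eq] at hX ⊢
  have hmem : ∀ x, x ∈ X ↔ (Nat.card (bracketRight x).range : ℝ) ≤ 2 / ε := by
    intro x; rw [hX]; rfl
  have hLpos : (0 : ℝ) < Nat.card L := by exact_mod_cast Nat.card_pos
  have hrpos : ∀ x : L, (1 : ℝ) ≤ Nat.card (bracketRight x).range := by
    intro x; exact_mod_cast Nat.card_pos
  have hsum := lieCommProb_mul_card L
  rw [hcp] at hsum
  have hε1 : ε ≤ 1 := by
    have : ε * Nat.card L ≤ ∑ _x : L, (1 : ℝ) := by
      rw [hsum]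
      exact Finset.sum_le_sum fun x _ => inv_le_one_of_one_le₀ (hrpos x)
    simp only [Finset.sum_const, Finset.card_univ, nsmul_eq_mul, mul_one,
      ← Nat.card_eq_fintype_card] at this
    nlinarith
  have h2ε : 1 ≤ 2 / ε := by rw [le_div_iff₀ hε]; linarith
  have h0 : (0 : L) ∈ X := by
    have : bracketRight (0 : L) = 0 := by ext y; exact lie_zero y
    rw [hmem, this]
    simpa using h2ε
  have hneg : ∀ x ∈ X, -x ∈ X := by
    intro x hx
    have : (bracketRight (-x)).range = (bracketRight x).range := by
      ext z
      constructor
      · rintro ⟨y, rfl⟩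
        exact ⟨-y, by simp [bracketRight]⟩
      · rintro ⟨y, rfl⟩
        exact ⟨-y, by simp [bracketRight]⟩
    rw [hmem, this]
    exact (hmem x).1 hx
  -- Elements outside `X` contribute at most `ε / 2` each to the sum, those of `X` at most `1`.
  have hcardX : ε / 2 * Nat.card L ≤ X.ncard := by
    have h1 : ε * Nat.card L ≤ ∑ x : L, ((if x ∈ X then (1 : ℝ) else 0) + ε / 2) := by
      rw [hsum]
      refine Finset.sum_le_sum fun x _ => ?_
      split_ifs with hx
      · linarith [inv_le_one_of_one_le₀ (hrpos x)]
      · rw [hmem, not_le] at hx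
        rw [zero_add, ← inv_div]
        exact inv_anti₀ (by positivity) hx.le
    rw [Finset.sum_add_distrib, Finset.sum_boole, Finset.sum_const, Finset.card_univ,
      nsmul_eq_mul, ← Nat.card_eq_fintype_card] at h1
    have h2 : (Finset.univ.filter (· ∈ X)).card = X.ncard := by
      rw [← Set.ncard_coe_finset]; simp
    rw [h2] at h1
    linarith
  obtain ⟨k, hk, hkB⟩ := exists_closure_subset_nsmul X h0 hneg
  rw [← hB] at hk hkB
  have hkε : ((3 * k + 2 : ℕ) : ℝ) ≤ 6 / ε := by
    have h1 : ((k : ℝ) + 1) * X.ncard ≤ Nat.card L := by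
      exact_mod_cast hk.trans (AddSubgroup.card_le_card_addGroup B)
    have h2 : ((k : ℝ) + 1) * (ε / 2 * Nat.card L) ≤ Nat.card L :=
      (mul_le_mul_of_nonneg_left hcardX (by positivity)).trans h1
    have h3 : ((k : ℝ) + 1) * (ε / 2) ≤ 1 := by
      refine le_of_mul_le_mul_right ?_ hLpos
      linarith
    rw [le_div_iff₀ hε]
    push_cast
    nlinarith
  refine ⟨fun b hb => ?_, fun b hb => ?_⟩
  · have hn := hkB b hb
    rw [Set.mem_nsmul] at hn
    obtain ⟨f, hf⟩ := hn
    exact ⟨3 * k + 2, fun i => f i, hkε, fun i => (f i).2, by rw [← hf, List.sum_ofFn]⟩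
  · have hpow : ∀ (n : ℕ) (a : L), a ∈ n • X →
        (Nat.card (bracketRight a).range : ℝ) ≤ (2 / ε) ^ n := by
      intro n
      induction n with
      | zero =>
        intro a ha
        rw [zero_nsmul, Set.mem_zero] at ha
        have : bracketRight (0 : L) = 0 := by ext y; exact lie_zero y
        rw [ha, this]
        simp
      | succ n ih =>
        intro a ha
        rw [succ_nsmul] at ha
        obtain ⟨c, hc, x, hx, rfl⟩ := ha
        calc (Nat.card (bracketRight (c + x)).range : ℝ)
            ≤ Nat.card (bracketRight c).range * Nat.card (bracketRight x).range := by
              exact_mod_cast card_range_bracketRight_add_le c x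
          _ ≤ (2 / ε) ^ n * (2 / ε) :=
              mul_le_mul (ih c hc) ((hmem x).1 hx) (by positivity) (by positivity)
          _ = (2 / ε) ^ (n + 1) := (pow_succ _ _).symm
    refine (hpow _ b (hkB b hb)).trans ?_
    rw [← Real.rpow_natCast]
    exact Real.rpow_le_rpow_of_exponent_le h2ε hkε
end

section
/- Let R be an associative ring and D a two-sided ideal of R such that the set D² = {d₁d₂ : d₁, d₂ ∈ D} has cardinality at most n. Then the additive subgroup of R generated by D² is a two-sided ideal of R, and its order is at most g(n) for a universal function g depending only on n. -/
/-! The set `S = D²` is closed under integer multiples, because `k • (d₁ * d₂) = (k • d₁) * d₂`.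
Every element of the subgroup generated by `S` is an integer combination `∑ s ∈ S, k s • s`, so it
is a sum `∑ s ∈ S, f s` for some map `f : S → S`. There are at most `n ^ n` such maps, which gives
the bound `g n = n ^ n`. The ideal property is `r * (d₁ * d₂) = (r * d₁) * d₂` and its mirror
image, extended additively. -/

/-- For an additive subgroup `D` of a ring `R`, the set
`D² = {d₁ * d₂ : d₁, d₂ ∈ D}` of products of two elements of `D`. -/
def sqSet (R : Type) [NonUnitalRing R] (D : AddSubgroup R) : Set R :=
  {z : R | ∃ d₁ ∈ D, ∃ d₂ ∈ D, z = d₁ * d₂}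

/-- In an additive commutative group, a finite set stable under integer multiples, with `m` elements,
generates a finite subgroup of order at most `m ^ m`. -/
theorem card_closure_le_of_zsmul_mem {A : Type} [AddCommGroup A] (S : Set A) (hS : S.Finite)
    (hmul : ∀ s ∈ S, ∀ k : ℤ, k • s ∈ S) :
    Finite (AddSubgroup.closure S) ∧
      Nat.card (AddSubgroup.closure S) ≤ Nat.card S ^ Nat.card S := by
  classical
  have : Fintype S := hS.fintype
  have hcomb : ∀ x ∈ AddSubgroup.closure S, ∃ k : S → ℤ, ∑ s, k s • (s : A) = x := by
    intro x hx
    rw [← Submodule.mem_span_range_iff_exists_fun, Subtype.range_coe]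
    rwa [← Submodule.span_int_eq_addSubgroupClosure] at hx
  have hsub : (AddSubgroup.closure S : Set A) ⊆
      Set.range (fun f : S → S => ∑ s, (f s : A)) := by
    intro x hx
    obtain ⟨k, hk⟩ := hcomb x hx
    exact ⟨fun s => ⟨k s • (s : A), hmul s s.2 (k s)⟩, hk⟩
  have hfin := Set.finite_range (fun f : S → S => ∑ s, (f s : A))
  refine ⟨(hfin.subset hsub).to_subtype, ?_⟩
  calc Nat.card (AddSubgroup.closure S)
      ≤ Nat.card (Set.range (fun f : S → S => ∑ s, (f s : A))) := Nat.card_mono hfin hsub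
    _ ≤ Nat.card (S → S) := Finite.card_range_le _
    _ = Nat.card S ^ Nat.card S := Nat.card_fun

/-- There is a universal function `g : ℕ → ℕ` such that for every associative
ring `R` and every two-sided ideal `D` of `R` with `|D²| ≤ n`, the additive
subgroup of `R` generated by `D²` is again a two-sided ideal, and it is finite
of order at most `g n`. -/
theorem closure_of_square_is_ideal :
    ∃ g : ℕ → ℕ, ∀ (R : Type) [NonUnitalRing R] (n : ℕ) (D : AddSubgroup R),
      (∀ d ∈ D, ∀ r : R, r * d ∈ D ∧ d * r ∈ D) →
      (sqSet R D).Finite →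
      Nat.card (sqSet R D) ≤ n →
      (∀ a ∈ AddSubgroup.closure (sqSet R D), ∀ r : R,
        r * a ∈ AddSubgroup.closure (sqSet R D) ∧
        a * r ∈ AddSubgroup.closure (sqSet R D)) ∧
      Finite (AddSubgroup.closure (sqSet R D)) ∧
      Nat.card (AddSubgroup.closure (sqSet R D)) ≤ g n := by
  refine ⟨fun n => n ^ n, fun R _ n D hD hfin hn => ⟨fun a ha r => ⟨?_, ?_⟩, ?_⟩⟩
  · induction ha using AddSubgroup.closure_induction with
    | mem x hx =>
      obtain ⟨d₁, h₁, d₂, h₂, rfl⟩ := hx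
      exact AddSubgroup.subset_closure ⟨r * d₁, (hD d₁ h₁ r).1, d₂, h₂, (mul_assoc ..).symm⟩
    | zero => simp
    | add x y _ _ hx hy => rw [mul_add]; exact add_mem hx hy
    | neg x _ hx => rw [mul_neg]; exact neg_mem hx
  · induction ha using AddSubgroup.closure_induction with
    | mem x hx =>
      obtain ⟨d₁, h₁, d₂, h₂, rfl⟩ := hx
      exact AddSubgroup.subset_closure ⟨d₁, h₁, d₂ * r, (hD d₂ h₂ r).2, mul_assoc ..⟩
    | zero => simp
    | add x y _ _ hx hy => rw [add_mul]; exact add_mem hx hy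
    | neg x _ hx => rw [neg_mul]; exact neg_mem hx
  · have hmul : ∀ s ∈ sqSet R D, ∀ k : ℤ, k • s ∈ sqSet R D := by
      rintro _ ⟨d₁, h₁, d₂, h₂, rfl⟩ k
      exact ⟨k • d₁, D.zsmul_mem h₁ k, d₂, h₂, (smul_mul_assoc k d₁ d₂).symm⟩
    obtain ⟨hf, hc⟩ := card_closure_le_of_zsmul_mem (sqSet R D) hfin hmul
    have := hfin.to_subtype
    have : Nonempty (sqSet R D) := ⟨⟨0, 0, D.zero_mem, 0, D.zero_mem, (mul_zero 0).symm⟩⟩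
    have hpos : 0 < n := Nat.card_pos.trans_le hn
    exact ⟨hf, hc.trans ((Nat.pow_le_pow_left hn _).trans (Nat.pow_le_pow_right hpos hn))⟩
end

section
/- For every natural number n ≥ 1 there exists δ > 0 (depending only on n) such that the following holds: if R is a finite associative ring admitting a Lie-ideal D of the Lie ring (R, [·,·]) (with [x,y] = xy − yx) such that the index of D in (R,+) is at most n and the additive subgroup generated by [D,D] has order at most n, then cp(R) ≥ δ. -/
/-- The additive subgroup generated by the commutators `[x, y]` with `x, y ∈ D`. -/
def commSubgroup {R : Type} [NonUnitalRing R] (D : AddSubgroup R) : AddSubgroup R :=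
  AddSubgroup.closure {z : R | ∃ x ∈ D, ∃ y ∈ D, z = x * y - y * x}

/-- The additive homomorphism `y ↦ [x, y]` from `D` to the subgroup generated by `[D, D]`. -/
def commHom {R : Type} [NonUnitalRing R] (D : AddSubgroup R) (x : D) : D →+ commSubgroup D where
  toFun y := ⟨x * y - y * x, AddSubgroup.subset_closure ⟨x, x.2, y, y.2, rfl⟩⟩
  map_zero' := by ext; simp
  map_add' a b := by
    ext
    simp only [AddSubgroup.coe_add, mul_add, add_mul]
    abel

theorem card_le_mul_card_ker_commHom {R : Type} [NonUnitalRing R] [Finite R] (D : AddSubgroup R)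
    {n : ℕ} (h : Nat.card (commSubgroup D) ≤ n) (x : D) :
    Nat.card D ≤ n * Nat.card (commHom D x).ker := by
  rw [← (commHom D x).ker.index_mul_card, AddSubgroup.index_ker]
  gcongr
  exact (Nat.card_le_card_of_injective _ Subtype.val_injective).trans h

/-- Summing over `x` the orders of the centralizers of `x` in `D`. -/
theorem card_mul_card_le {R : Type} [NonUnitalRing R] [Finite R] (D : AddSubgroup R)
    {n : ℕ} (h : Nat.card (commSubgroup D) ≤ n) :
    Nat.card D * Nat.card D ≤ n * Nat.card {p : R × R // p.1 * p.2 = p.2 * p.1} := by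
  have : Fintype D := Fintype.ofFinite D
  have hinj : Nat.card (Σ x : D, (commHom D x).ker) ≤
      Nat.card {p : R × R // p.1 * p.2 = p.2 * p.1} := by
    refine Nat.card_le_card_of_injective
      (fun s => ⟨(s.1, s.2.1), sub_eq_zero.1 (congrArg Subtype.val s.2.2)⟩) ?_
    rintro ⟨x, y, hy⟩ ⟨x', y', hy'⟩ hs
    simp only [Subtype.mk.injEq, Prod.mk.injEq, SetLike.coe_eq_coe] at hs
    obtain ⟨rfl, rfl⟩ := hs
    rfl
  calc Nat.card D * Nat.card D = ∑ _x : D, Nat.card D := by simp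
    _ ≤ ∑ x : D, n * Nat.card (commHom D x).ker :=
      Finset.sum_le_sum fun x _ => card_le_mul_card_ker_commHom D h x
    _ = n * Nat.card (Σ x : D, (commHom D x).ker) := by rw [Nat.card_sigma, Finset.mul_sum]
    _ ≤ _ := Nat.mul_le_mul_left n hinj

/-- **Converse to Neumann's theorem for finite rings.**  For every `n ≥ 1`
there exists `δ > 0` depending only on `n` such that every finite ring `R`
admitting a Lie-ideal `D` of `(R, [·,·])` with additive index at most `n` and
with the additive subgroup generated by `[D, D]` of order at most `n` satisfies
`cp(R) ≥ δ`. -/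
theorem ring_commProb_converse :
    ∀ n : ℕ, 1 ≤ n → ∃ δ : ℝ, 0 < δ ∧
      ∀ (R : Type) [NonUnitalRing R] [Fintype R] (D : AddSubgroup R),
        (∀ (x : R), ∀ d ∈ D, x * d - d * x ∈ D) →
        D.index ≤ n →
        Nat.card
          (AddSubgroup.closure {z : R | ∃ x ∈ D, ∃ y ∈ D, z = x * y - y * x}) ≤ n →
        δ ≤ ringCommProb R := by
  intro n hn
  have hn' : (0 : ℝ) < n := by exact_mod_cast hn
  refine ⟨1 / (n : ℝ) ^ 3, by positivity, fun R _ _ D _ hD hC => ?_⟩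
  have hR : (0 : ℝ) < Nat.card R := by exact_mod_cast Nat.card_pos
  have h1 : Nat.card R ≤ n * Nat.card D := by
    rw [← D.index_mul_card]
    gcongr
  have h2 := card_mul_card_le D hC
  have h3 : Nat.card R ^ 2 ≤ Nat.card {p : R × R // p.1 * p.2 = p.2 * p.1} * n ^ 3 := by
    calc Nat.card R ^ 2 ≤ (n * Nat.card D) ^ 2 := by gcongr
      _ = n ^ 2 * (Nat.card D * Nat.card D) := by ring
      _ ≤ n ^ 2 * (n * Nat.card {p : R × R // p.1 * p.2 = p.2 * p.1}) := by gcongr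
      _ = _ := by ring
  rw [ringCommProb, div_le_div_iff₀ (by positivity) (by positivity), one_mul]
  exact_mod_cast h3
end

section
/- For every natural number n ≥ 1 there exists δ > 0 (depending only on n) such that the following holds: if R is a finite associative ring admitting a two-sided ideal D with index at most n in (R,+) and with the set D² = {d₁d₂ : d₁, d₂ ∈ D} of cardinality at most n, then zp(R) ≥ δ. -/
/-- Fix for each `d` and each value `z` of `y ↦ d * y` a solution `y₀ ∈ R` of `d * y₀ = z`. Then
`(d, y) ↦ ((d, y - y₀), d * y)`, with `y₀` chosen for `z = d * y`, embeds `D × D` into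
(zero pairs) `× D²`. -/
theorem card_sq_le_card_zero_pairs {R : Type} [NonUnitalRing R] [Fintype R] (D : AddSubgroup R) :
    Nat.card D ^ 2 ≤ Nat.card {p : R × R // p.1 * p.2 = 0} *
      Nat.card {z : R | ∃ d₁ ∈ D, ∃ d₂ ∈ D, z = d₁ * d₂} := by
  have hrep : ∀ q : D × D, ∃ y : R, (q.1 : R) * y = q.1 * q.2 := fun q => ⟨q.2, rfl⟩
  -- The representative must depend on `d` and the product only, so it is chosen for those.
  have hrep' : ∀ d z : R, ∃ y : R, (∃ y', d * y' = z) → d * y = z := by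
    intro d z
    by_cases h : ∃ y', d * y' = z
    · exact ⟨h.choose, fun _ => h.choose_spec⟩
    · exact ⟨0, fun h' => absurd h' h⟩
  choose g hg using hrep'
  rw [sq, ← Nat.card_prod, ← Nat.card_prod]
  refine Nat.card_le_card_of_injective
    (fun q : D × D => (⟨⟨⟨q.1, q.2 - g q.1 (q.1 * q.2)⟩, ?_⟩,
      ⟨q.1 * q.2, q.1, q.1.2, q.2, q.2.2, rfl⟩⟩ :
      {p : R × R // p.1 * p.2 = 0} × {z : R | ∃ d₁ ∈ D, ∃ d₂ ∈ D, z = d₁ * d₂})) ?_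
  · simp only [mul_sub]
    rw [hg _ _ (hrep q), sub_self]
  · rintro ⟨a, b⟩ ⟨c, d⟩ h
    simp only [Prod.mk.injEq, Subtype.mk.injEq] at h
    obtain ⟨⟨h1, h2⟩, h3⟩ := h
    rw [h3, h1] at h2
    exact Prod.ext (Subtype.ext h1) (Subtype.ext (sub_left_injective h2))

/-- **Converse to the zero-probability theorem.**  For every `n ≥ 1` there
exists `δ > 0` depending only on `n` such that every finite ring `R` admitting
a two-sided ideal `D` with additive index at most `n` and with
`|D²| = |{d₁ * d₂ : d₁, d₂ ∈ D}| ≤ n` satisfies `zp(R) ≥ δ`. -/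
theorem ring_zeroProb_converse :
    ∀ n : ℕ, 1 ≤ n → ∃ δ : ℝ, 0 < δ ∧
      ∀ (R : Type) [NonUnitalRing R] [Fintype R] (D : AddSubgroup R),
        (∀ d ∈ D, ∀ r : R, r * d ∈ D ∧ d * r ∈ D) →
        D.index ≤ n →
        Nat.card {z : R | ∃ d₁ ∈ D, ∃ d₂ ∈ D, z = d₁ * d₂} ≤ n →
        δ ≤ ringZeroProb R := by
  intro n hn
  have hn0 : (0 : ℝ) < n := by exact_mod_cast hn
  refine ⟨1 / (n : ℝ) ^ 3, by positivity, ?_⟩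
  intro R _ _ D _ hidx hcard
  have hR : 0 < Nat.card R := Nat.card_pos
  have key : Nat.card R ^ 2 ≤ Nat.card {p : R × R // p.1 * p.2 = 0} * n ^ 3 :=
    calc Nat.card R ^ 2 = Nat.card D ^ 2 * D.index ^ 2 := by
          rw [← mul_pow, D.card_mul_index]
      _ ≤ (Nat.card {p : R × R // p.1 * p.2 = 0} * n) * n ^ 2 := by
          gcongr
          exact (card_sq_le_card_zero_pairs D).trans (Nat.mul_le_mul_left _ hcard)
      _ = _ := by ring
  have key' : (Nat.card R : ℝ) ^ 2 ≤ Nat.card {p : R × R // p.1 * p.2 = 0} * (n : ℝ) ^ 3 := by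
    exact_mod_cast key
  have hR' : (0 : ℝ) < Nat.card R := by exact_mod_cast hR
  rw [ringZeroProb, div_le_div_iff₀ (by positivity) (by positivity), one_mul]
  exact key'
end
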